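/- If G is a minimal bicritical graph with n ≥ 6 vertices, then G has at most 5(n − 2)/2 edges. -/

import Mathlib

open SimpleGraph

/-- A graph has a perfect matching. -/
def HasPerfectMatching {V : Type*} (G : SimpleGraph V) : Prop :=
  ∃ M : G.Subgraph, M.IsPerfectMatching

/-- `G` is 3-connected: at least 4 vertices, and deleting any at most 2
vertices leaves a connected graph. -/
def IsThreeConnected {V : Type*} [Fintype V] (G : SimpleGraph V) : Prop :=
  4 ≤ Fintype.card V ∧ ∀ S : Set V, S.ncard ≤ 2 → (G.induce Sᶜ).Connected

/-- A brick: a 3-connected graph such that deleting any two distinct vertices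
leaves a graph with a perfect matching. -/
def IsBrick {V : Type*} [Fintype V] (G : SimpleGraph V) : Prop :=
  IsThreeConnected G ∧
    ∀ u v : V, u ≠ v → HasPerfectMatching (G.induce ({u, v} : Set V)ᶜ)

/-- A minimal brick: a brick such that deleting any edge destroys brickness. -/
def IsMinimalBrick {V : Type*} [Fintype V] (G : SimpleGraph V) : Prop :=
  IsBrick G ∧ ∀ e ∈ G.edgeSet, ¬ IsBrick (G.deleteEdges {e})

/-- A graph is bicritical if deleting any two distinct vertices leaves a graph
with a perfect matching. -/
def IsBicritical {V : Type*} [Fintype V] (G : SimpleGraph V) : Prop :=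
  ∀ u v : V, u ≠ v → HasPerfectMatching (G.induce ({u, v} : Set V)ᶜ)

/-- A bicritical graph is minimal if deleting any edge destroys bicriticality. -/
def IsMinimalBicritical {V : Type*} [Fintype V] (G : SimpleGraph V) : Prop :=
  IsBicritical G ∧ ∀ e ∈ G.edgeSet, ¬ IsBicritical (G.deleteEdges {e})

section BCProof

set_option linter.unusedSectionVars false

variable {V : Type*} [Fintype V] [DecidableEq V]

/-- `f` is a perfect matching of `K` on the vertex set `A`. -/
def BCpm (K : SimpleGraph V) (A : Finset V) (f : V → V) : Prop :=
  ∀ v ∈ A, f v ∈ A ∧ f (f v) = v ∧ K.Adj v (f v)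

/-- reachability avoiding `X`. -/
def BCreach (K : SimpleGraph V) (X : Finset V) (p q : V) : Prop :=
  Relation.ReflTransGen (fun a b => K.Adj a b ∧ a ∉ X ∧ b ∉ X) p q

/-- barrier with respect to `M`. -/
def BCbar (K : SimpleGraph V) (M : V → V) (X : Finset V) : Prop :=
  (∀ x ∈ X, M x ∉ X) ∧ ∀ x ∈ X, ∀ y ∈ X, BCreach K X (M x) (M y) → x = y

theorem bc_even (A : Finset V) (f : V → V)
    (h : ∀ v ∈ A, f v ∈ A ∧ f (f v) = v ∧ f v ≠ v) : Even A.card := by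
  have : ∑ x ∈ A, (1 : ZMod 2) = 0 := by
    apply Finset.sum_involution (fun a _ => f a)
    · intro a ha; decide
    · intro a ha _; exact (h a ha).2.2
    · intro a ha; exact (h a ha).1
    · intro a ha; exact (h a ha).2.1
  simp at this
  exact (ZMod.natCast_eq_zero_iff_even).1 this

theorem bc_reach_symm {K : SimpleGraph V} {X : Finset V} {p q : V} (h : BCreach K X p q) :
    BCreach K X q p := by
  unfold BCreach at *
  induction h with
  | refl => exact Relation.ReflTransGen.refl
  | tail _ h ih => exact Relation.ReflTransGen.head ⟨h.1.symm, h.2.2, h.2.1⟩ ih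

theorem bc_reach_mono {K K' : SimpleGraph V} {X Y : Finset V} (hK : K ≤ K') (hY : Y ⊆ X)
    {p q : V} (h : BCreach K X p q) : BCreach K' Y p q := by
  unfold BCreach at *
  induction h with
  | refl => exact Relation.ReflTransGen.refl
  | tail _ h ih =>
    exact Relation.ReflTransGen.tail ih
      ⟨hK h.1, fun hh => h.2.1 (hY hh), fun hh => h.2.2 (hY hh)⟩

theorem bc_reach_notMem {K : SimpleGraph V} {X : Finset V} {p q : V} (h : BCreach K X p q)
    (hp : p ∉ X) : q ∉ X := by
  unfold BCreach at *
  induction h with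
  | refl => exact hp
  | tail _ h _ => exact h.2.2

theorem bc_reach_mem {K : SimpleGraph V} {X U : Finset V} {p q : V}
    (hs : ∀ a b, K.Adj a b → a ∈ U ∧ b ∈ U) (h : BCreach K X p q)
    (hp : p ∈ U) : q ∈ U := by
  unfold BCreach at *
  induction h with
  | refl => exact hp
  | tail _ h _ => exact (hs _ _ h.1).2

open Classical in
/-- component of `p` -/
noncomputable def BCq (K : SimpleGraph V) (X : Finset V) (p : V) : Finset V :=
  Finset.univ.filter (fun q => BCreach K X p q)

theorem bc_mem_q {K : SimpleGraph V} {X : Finset V} {p q : V} :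
    q ∈ BCq K X p ↔ BCreach K X p q := by
  simp [BCq]

/-- `M` is closed on the component of `M x` apart from `M x`. -/
theorem bc_M_closed {K : SimpleGraph V} {X U : Finset V} {M : V → V}
    (hs : ∀ a b, K.Adj a b → a ∈ U ∧ b ∈ U) (hM : BCpm K U M) (hX : X ⊆ U)
    (hB : BCbar K M X) {x : V} (hx : x ∈ X) {v : V} (hv : BCreach K X (M x) v) (hne : v ≠ M x) :
    BCreach K X (M x) (M v) := by
  have hvX := bc_reach_notMem hv (hB.1 x hx)
  have hvU := bc_reach_mem hs hv (hM x (hX hx)).1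
  obtain ⟨h1, h2, h3⟩ := hM v hvU
  by_cases hmv : M v ∈ X
  · have := hB.2 x hx (M v) hmv (by rw [h2]; exact hv)
    rw [this, h2] at hne
    exact absurd rfl hne
  · exact Relation.ReflTransGen.tail hv ⟨h3, hvX, hmv⟩

theorem bc_q_odd {K : SimpleGraph V} {X U : Finset V} {M : V → V}
    (hs : ∀ a b, K.Adj a b → a ∈ U ∧ b ∈ U) (hM : BCpm K U M) (hX : X ⊆ U)
    (hB : BCbar K M X) {x : V} (hx : x ∈ X) : Odd (BCq K X (M x)).card := by
  have h0 : M x ∈ BCq K X (M x) := bc_mem_q.2 Relation.ReflTransGen.refl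
  have : Even ((BCq K X (M x)).erase (M x)).card := by
    apply bc_even _ M
    intro v hv
    rw [Finset.mem_erase, bc_mem_q] at hv
    have hvU := bc_reach_mem hs hv.2 (hM x (hX hx)).1
    obtain ⟨h1, h2, h3⟩ := hM v hvU
    refine ⟨?_, h2, h3.ne.symm⟩
    rw [Finset.mem_erase, bc_mem_q]
    refine ⟨?_, bc_M_closed hs hM hX hB hx hv.2 hv.1⟩
    intro h
    have : v = x := by
      have := congrArg M h
      rwa [h2, (hM x (hX hx)).2.1] at this
    exact bc_reach_notMem hv.2 (hB.1 x hx) (this ▸ hx)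
  rw [← Finset.card_erase_add_one h0]
  exact this.add_one

/-- The core counting lemma. -/
theorem bc_core {K : SimpleGraph V} {X U R : Finset V} {M N : V → V}
    (hs : ∀ a b, K.Adj a b → a ∈ U ∧ b ∈ U) (hM : BCpm K U M) (hX : X ⊆ U)
    (hB : BCbar K M X) (hN : BCpm K (U \ R) N) {z : V} (hz : z ∈ X) (hzR : z ∈ R) :
    ∃ w ∈ X, (∀ v, BCreach K X (M w) v → v ∉ R → BCreach K X (M w) (N v)) ∧
      Odd (BCq K X (M w) ∩ R).card := by
  have h1 : ∃ w ∈ X, ∀ v, BCreach K X (M w) v → v ∉ R → BCreach K X (M w) (N v) := by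
    by_contra hcon
    push Not at hcon
    choose! g hg1 hg2 hg3 using hcon
    have hgU : ∀ w ∈ X, g w ∈ U \ R := fun w hw => by
      rw [Finset.mem_sdiff]
      exact ⟨bc_reach_mem hs (hg1 w hw) (hM w (hX hw)).1, hg2 w hw⟩
    have hgX : ∀ w ∈ X, N (g w) ∈ X := by
      intro w hw
      by_contra hc
      exact hg3 w hw (Relation.ReflTransGen.tail (hg1 w hw)
        ⟨(hN _ (hgU w hw)).2.2, bc_reach_notMem (hg1 w hw) (hB.1 w hw), hc⟩)
    have hmaps : ∀ w ∈ X, N (g w) ∈ X.erase z := by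
      intro w hw
      rw [Finset.mem_erase]
      refine ⟨?_, hgX w hw⟩
      intro h
      have := (hN _ (hgU w hw)).1
      rw [h, Finset.mem_sdiff] at this
      exact this.2 hzR
    have hcard : (X.erase z).card < X.card := Finset.card_erase_lt_of_mem hz
    obtain ⟨w, hw, w', hw', hne, heq⟩ :=
      Finset.exists_ne_map_eq_of_card_lt_of_maps_to hcard (f := fun w => N (g w))
        (fun w hw => hmaps w hw)
    apply hne
    have hgg : g w = g w' := by
      have := congrArg N heq
      rwa [(hN _ (hgU w hw)).2.1, (hN _ (hgU w' hw')).2.1] at this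
    apply hB.2 w hw w' hw'
    exact Relation.ReflTransGen.trans (hg1 w hw) (hgg ▸ bc_reach_symm (hg1 w' hw'))
  obtain ⟨w, hw, hcl⟩ := h1
  refine ⟨w, hw, hcl, ?_⟩
  have hodd := bc_q_odd hs hM hX hB hw
  have heven : Even (BCq K X (M w) \ R).card := by
    apply bc_even _ N
    intro v hv
    rw [Finset.mem_sdiff, bc_mem_q] at hv
    have hvU : v ∈ U \ R :=
      Finset.mem_sdiff.2 ⟨bc_reach_mem hs hv.1 (hM w (hX hw)).1, hv.2⟩
    obtain ⟨h1, h2, h3⟩ := hN v hvU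
    refine ⟨?_, h2, h3.ne.symm⟩
    rw [Finset.mem_sdiff, bc_mem_q]
    exact ⟨hcl v hv.1 hv.2, (Finset.mem_sdiff.1 h1).2⟩
  have := Finset.card_sdiff_add_card_inter (BCq K X (M w)) R
  rw [← this] at hodd
  grind

/-- Two vertices of a barrier cannot be removed leaving a perfect matching. -/
theorem bc_bar_no_pm {K : SimpleGraph V} {X U : Finset V} {M N : V → V}
    (hs : ∀ a b, K.Adj a b → a ∈ U ∧ b ∈ U) (hM : BCpm K U M) (hX : X ⊆ U)
    (hB : BCbar K M X) {u v : V} (hu : u ∈ X) (hv : v ∈ X)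
    (hN : BCpm K (U \ {u, v}) N) : False := by
  obtain ⟨w, hw, -, hodd⟩ := bc_core hs hM hX hB hN hu (by simp)
  have : BCq K X (M w) ∩ {u, v} = ∅ := by
    ext p
    simp only [Finset.mem_inter, bc_mem_q, Finset.mem_insert, Finset.mem_singleton,
      Finset.notMem_empty, iff_false, not_and]
    intro hp hpp
    have := bc_reach_notMem hp (hB.1 w hw)
    rcases hpp with rfl | rfl <;> contradiction
  rw [this] at hodd
  simp at hodd

/-- one-element version of the core lemma. -/
theorem bc_core_pair {K : SimpleGraph V} {X U : Finset V} {M N : V → V}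
    (hs : ∀ a b, K.Adj a b → a ∈ U ∧ b ∈ U) (hM : BCpm K U M) (hX : X ⊆ U)
    (hB : BCbar K M X) {z t : V} (hz : z ∈ X) (hN : BCpm K (U \ {z, t}) N) :
    ∃ w ∈ X, BCreach K X (M w) t ∧
      ∀ v, BCreach K X (M w) v → v ≠ t → BCreach K X (M w) (N v) := by
  obtain ⟨w, hw, hcl, hodd⟩ := bc_core hs hM hX hB hN hz (by simp)
  refine ⟨w, hw, ?_, ?_⟩
  · by_contra hc
    have : BCq K X (M w) ∩ {z, t} = ∅ := by
      ext p
      simp only [Finset.mem_inter, bc_mem_q, Finset.mem_insert, Finset.mem_singleton,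
        Finset.notMem_empty, iff_false, not_and]
      intro hp hpp
      have := bc_reach_notMem hp (hB.1 w hw)
      rcases hpp with rfl | rfl <;> contradiction
    rw [this] at hodd
    simp at hodd
  · intro v hv hvt
    apply hcl v hv
    simp only [Finset.mem_insert, Finset.mem_singleton, not_or]
    refine ⟨?_, hvt⟩
    rintro rfl
    exact bc_reach_notMem hv (hB.1 w hw) hz

theorem bc_union_aux {K : SimpleGraph V} {X Y U : Finset V} {M N : V → V}
    (hs : ∀ a b, K.Adj a b → a ∈ U ∧ b ∈ U) (hM : BCpm K U M) (hX : X ⊆ U) (hY : Y ⊆ U)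
    (hBX : BCbar K M X) (hBY : BCbar K M Y) {x y z : V} (hx : x ∈ X) (hy : y ∈ Y)
    (hzX : z ∈ X) (hzY : z ∈ Y) (hne : x ≠ y) (hN : BCpm K (U \ {z, M x}) N)
    (h1 : BCreach K X (M x) (M y)) (h2 : BCreach K Y (M x) (M y)) : False := by
  obtain ⟨w, hw, hw1, hw2⟩ := bc_core_pair hs hM hX hBX hzX hN
  obtain rfl := hBX.2 w hw x hx hw1
  obtain ⟨w', hw', hw1', hw2'⟩ := bc_core_pair hs hM hY hBY hzY hN
  obtain rfl := hBY.2 w' hw' y hy (Relation.ReflTransGen.trans hw1' h2)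
  set W := BCq K X (M w) ∩ BCq K Y (M w') with hW
  have hmW : ∀ v, v ∈ W ↔ BCreach K X (M w) v ∧ BCreach K Y (M w') v := by
    intro v; rw [hW, Finset.mem_inter, bc_mem_q, bc_mem_q]
  have hxW : M w ∈ W := (hmW _).2 ⟨hw1, hw1'⟩
  have hyW : M w' ∈ W := (hmW _).2 ⟨h1, Relation.ReflTransGen.refl⟩
  have hinj : ∀ a ∈ U, ∀ b ∈ U, M a = M b → a = b := by
    intro a ha b hb h
    have := congrArg M h
    rwa [(hM a ha).2.1, (hM b hb).2.1] at this
  have hWU : ∀ v ∈ W, v ∈ U := fun v hv =>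
    bc_reach_mem hs ((hmW v).1 hv).1 (hM w (hX hw)).1
  have hev1 : Even (W.erase (M w)).card := by
    apply bc_even _ N
    intro v hv
    rw [Finset.mem_erase] at hv
    have hvz : v ≠ z := by
      rintro rfl
      exact bc_reach_notMem ((hmW _).1 hv.2).1 (hBX.1 w hw) hzX
    have hvU : v ∈ U \ {z, M w} := by simp [hWU v hv.2, hv.1, hvz]
    obtain ⟨k1, k2, k3⟩ := hN v hvU
    refine ⟨?_, k2, k3.ne.symm⟩
    rw [Finset.mem_erase, hmW]
    refine ⟨?_, hw2 v ((hmW v).1 hv.2).1 hv.1, hw2' v ((hmW v).1 hv.2).2 hv.1⟩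
    intro h
    rw [h] at k1
    simp at k1
  have hev2 : Even ((W.erase (M w)).erase (M w')).card := by
    apply bc_even _ M
    intro v hv
    rw [Finset.mem_erase, Finset.mem_erase] at hv
    obtain ⟨g1, g2, g3⟩ := hv
    have hvU := hWU v g3
    obtain ⟨k1, k2, k3⟩ := hM v hvU
    refine ⟨?_, k2, k3.ne.symm⟩
    rw [Finset.mem_erase, Finset.mem_erase, hmW]
    refine ⟨?_, ?_, bc_M_closed hs hM hX hBX hw ((hmW v).1 g3).1 g2,
      bc_M_closed hs hM hY hBY hw' ((hmW v).1 g3).2 g1⟩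
    · intro h
      have := hinj _ hvU _ (hY hw') h
      exact bc_reach_notMem ((hmW _).1 g3).2 (hBY.1 w' hw') (this ▸ hw')
    · intro h
      have := hinj _ hvU _ (hX hw) h
      exact bc_reach_notMem ((hmW _).1 g3).1 (hBX.1 w hw) (this ▸ hw)
  have hmem : M w' ∈ W.erase (M w) := by
    rw [Finset.mem_erase]
    refine ⟨fun h => hne (hinj _ (hX hw) _ (hY hw') h.symm), hyW⟩
  have := Finset.card_erase_add_one hmem
  grind

theorem bc_conv (K : SimpleGraph V) (A : Finset V) (B : Set V) (h : ∀ v, v ∈ B ↔ v ∈ A) :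
    HasPerfectMatching (K.induce B) ↔ ∃ f, BCpm K A f := by
  classical
  constructor
  · rintro ⟨M, hM⟩
    rw [Subgraph.isPerfectMatching_iff] at hM
    choose g hg1 hg2 using hM
    simp only at hg2
    refine ⟨fun v => if h : v ∈ B then (g ⟨v, h⟩ : V) else v, ?_⟩
    intro v hv
    have hvB := (h v).2 hv
    have hgB := (g ⟨v, hvB⟩).2
    simp only [hvB, dif_pos, hgB]
    refine ⟨(h _).1 hgB, ?_, ?_⟩
    · have := hg2 (g ⟨v, hvB⟩) ⟨v, hvB⟩ (hg1 ⟨v, hvB⟩).symm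
      exact congrArg Subtype.val this.symm
    · exact M.adj_sub (hg1 ⟨v, hvB⟩)
  · rintro ⟨f, hf⟩
    have hfB : ∀ v : B, f v ∈ A ∧ f (f v) = v ∧ K.Adj v (f v) := fun v => hf v ((h _).1 v.2)
    refine ⟨{ verts := Set.univ
              Adj := fun a b => f a = b
              adj_sub := ?_
              edge_vert := fun _ => Set.mem_univ _
              symm := ?_ }, ?_⟩
    · intro a b hab
      have := (hfB a).2.2
      rw [hab] at this
      exact this
    · constructor
      intro a b hab
      rw [← hab]; exact (hfB a).2.1
    · rw [Subgraph.isPerfectMatching_iff]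
      intro v
      refine ⟨⟨f v, (h _).2 (hfB v).1⟩, rfl, ?_⟩
      intro w hw
      exact Subtype.ext (Eq.symm hw)

theorem bc_even_set (S : Set V) (f : V → V)
    (h : ∀ v ∈ S, f v ∈ S ∧ f (f v) = v ∧ f v ≠ v) : Even S.ncard := by
  classical
  rw [Set.ncard_eq_toFinset_card']
  apply bc_even _ f
  intro v hv
  rw [Set.mem_toFinset] at hv ⊢
  exact h v hv

theorem bc_tutte {K : SimpleGraph V} {U : Finset V} {M : V → V}
    (hs : ∀ a b, K.Adj a b → a ∈ U ∧ b ∈ U) (hM : BCpm K U M) {u v : V} (hu : u ∈ U) (hv : v ∈ U)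
    (huv : u ≠ v) (hno : ¬ ∃ f, BCpm K (U \ {u, v}) f) :
    ∃ X ⊆ U, u ∈ X ∧ v ∈ X ∧ BCbar K M X := by
  classical
  set B : Set V := {w | w ∈ U ∧ w ≠ u ∧ w ≠ v} with hB
  have hBA : ∀ w, w ∈ B ↔ w ∈ U \ {u, v} := by
    intro w; simp [hB]
  rw [← bc_conv K _ B hBA] at hno
  unfold HasPerfectMatching at hno
  rw [SimpleGraph.tutte] at hno
  push Not at hno
  obtain ⟨Y, hY⟩ := hno
  unfold SimpleGraph.IsTutteViolator at hY
  set L := ((⊤ : (K.induce B).Subgraph).deleteVerts Y) with hL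
  have hverts : ∀ w : B, w ∈ L.verts ↔ w ∉ Y := by
    intro w; simp [hL]
  set X : Finset V := Finset.univ.filter (fun w => w = u ∨ w = v ∨ ∃ h : w ∈ B, (⟨w, h⟩ : B) ∈ Y)
    with hXdef
  have hmX : ∀ w, w ∈ X ↔ (w = u ∨ w = v ∨ ∃ h : w ∈ B, (⟨w, h⟩ : B) ∈ Y) := by
    intro w; simp [hXdef]
  have hXU : X ⊆ U := by
    intro w hw
    rcases (hmX w).1 hw with rfl | rfl | ⟨h, -⟩
    · exact hu
    · exact hv
    · exact h.1
  -- cardinality of X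
  have hXcard : X.card = Y.ncard + 2 := by
    have h1 : X = insert u (insert v ((Subtype.val '' Y).toFinset)) := by
      ext w
      simp [hmX]
    have hvn : v ∉ (Subtype.val '' Y).toFinset := by simp [hB]
    have hun : u ∉ insert v (Subtype.val '' Y).toFinset := by simp [hB, huv]
    rw [h1, Finset.card_insert_of_notMem hun, Finset.card_insert_of_notMem hvn,
      ← Set.ncard_eq_toFinset_card', Set.ncard_image_of_injective _ Subtype.val_injective]
  -- membership of vertices of L
  have hLv : ∀ w, w ∈ U → w ∉ X → ∃ h : w ∈ B, (⟨w, h⟩ : B) ∈ L.verts := by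
    intro w hw hwX
    rw [hmX] at hwX
    push Not at hwX
    refine ⟨⟨hw, hwX.1, hwX.2.1⟩, ?_⟩
    rw [hverts]
    exact hwX.2.2 _
  have hLX : ∀ w : L.verts, ((w : B) : V) ∈ U ∧ ((w : B) : V) ∉ X := by
    intro w
    refine ⟨w.1.2.1, ?_⟩
    rw [hmX]
    push Not
    refine ⟨w.1.2.2.1, w.1.2.2.2, fun h => ?_⟩
    exact (hverts w.1).1 w.2
  have hadj : ∀ a b : L.verts, K.Adj ((a : B) : V) ((b : B) : V) → L.coe.Adj a b := by
    intro a b hab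
    have ha := (hverts a.1).1 a.2
    have hb := (hverts b.1).1 b.2
    simp only [Subgraph.coe_adj, hL, Subgraph.deleteVerts_adj, Subgraph.verts_top, Set.mem_univ,
      Subgraph.top_adj, true_and]
    exact ⟨ha, hb, hab⟩
  -- every odd component has a vertex matched into X
  have hpsi : ∀ C ∈ L.coe.oddComponents, ∃ w : L.verts, w ∈ C.supp ∧ M ((w : B) : V) ∈ X := by
    intro C hC
    by_contra hcon
    push Not at hcon
    have hev : Even (Subtype.val '' (Subtype.val '' C.supp) : Set V).ncard := by
      apply bc_even_set _ M
      intro p hp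
      obtain ⟨q, ⟨w, hw, rfl⟩, rfl⟩ := hp
      have hwU := hLX w
      obtain ⟨k1, k2, k3⟩ := hM _ hwU.1
      refine ⟨?_, k2, k3.ne.symm⟩
      obtain ⟨h1, h2⟩ := hLv _ k1 (hcon w hw)
      refine ⟨⟨_, h1⟩, ⟨⟨_, h2⟩, ?_, rfl⟩, rfl⟩
      exact (ConnectedComponent.mem_supp_congr_adj C (hadj w ⟨_, h2⟩ k3)).1 hw
    rw [Set.ncard_image_of_injective _ Subtype.val_injective,
      Set.ncard_image_of_injective _ Subtype.val_injective] at hev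
    exact Nat.not_odd_iff_even.2 hev hC
  have hpsi' : ∀ C : L.coe.ConnectedComponent, ∃ w : L.verts, C ∈ L.coe.oddComponents →
      (w ∈ C.supp ∧ M ((w : B) : V) ∈ X) := by
    intro C
    by_cases hC : C ∈ L.coe.oddComponents
    · obtain ⟨w, hw⟩ := hpsi C hC
      exact ⟨w, fun _ => hw⟩
    · obtain ⟨w, hw⟩ := C.nonempty_supp
      exact ⟨w, fun h => absurd h hC⟩
  choose psi hpsi0 using hpsi'
  have hpsi1 : ∀ C ∈ L.coe.oddComponents, psi C ∈ C.supp := fun C hC => (hpsi0 C hC).1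
  have hpsi2 : ∀ C ∈ L.coe.oddComponents, M ((psi C : B) : V) ∈ X := fun C hC => (hpsi0 C hC).2
  have hinj : Set.InjOn (fun C => M ((psi C : B) : V)) L.coe.oddComponents := by
    intro C hC C' hC' heq
    have := congrArg M heq
    simp only at this
    rw [(hM _ (hLX _).1).2.1, (hM _ (hLX _).1).2.1] at this
    have h2 : psi C = psi C' := Subtype.ext (Subtype.ext this)
    have h3 := hpsi1 C hC
    rw [h2] at h3
    have h4 := hpsi1 C' hC'
    rw [ConnectedComponent.mem_supp_iff] at h3 h4
    exact h3.symm.trans h4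
  have hsub : (fun C => M ((psi C : B) : V)) '' L.coe.oddComponents ⊆ (X : Set V) := by
    rintro _ ⟨C, hC, rfl⟩
    exact hpsi2 C hC
  have hncard := Set.InjOn.ncard_image hinj
  -- parity
  have hUeven : Even U.card := bc_even U M (fun w hw => ⟨(hM w hw).1, (hM w hw).2.1,
    (hM w hw).2.2.ne.symm⟩)
  have hLcard : Nat.card L.verts + X.card = U.card := by
    have h1 : (Subtype.val '' L.verts).ncard = (U \ X).card := by
      rw [← Set.ncard_coe_finset]
      congr 1
      ext w
      simp only [Set.mem_image, Finset.mem_coe, Finset.mem_sdiff]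
      constructor
      · rintro ⟨q, hq, rfl⟩
        exact hLX ⟨q, hq⟩
      · rintro ⟨h1, h2⟩
        obtain ⟨h3, h4⟩ := hLv w h1 h2
        exact ⟨_, h4, rfl⟩
    rw [Set.ncard_image_of_injective _ Subtype.val_injective] at h1
    rw [Nat.card_coe_set_eq, h1, Finset.card_sdiff_add_card_eq_card hXU]
  have hpar := SimpleGraph.odd_ncard_oddComponents (G := L.coe)
  have hge : X.card ≤ L.coe.oddComponents.ncard := by
    rw [hXcard]
    by_contra hlt
    have h5 : L.coe.oddComponents.ncard = Y.ncard + 1 := by omega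
    rw [h5] at hpar
    grind
  have himg : (fun C => M ((psi C : B) : V)) '' L.coe.oddComponents = (X : Set V) := by
    apply Set.eq_of_subset_of_ncard_le hsub
    rw [hncard, Set.ncard_coe_finset]
    exact hge
  have hsurj : ∀ x ∈ X, ∃ C ∈ L.coe.oddComponents, x = M ((psi C : B) : V) ∧
      M x = ((psi C : B) : V) := by
    intro x hx
    have : x ∈ (X : Set V) := hx
    rw [← himg] at this
    obtain ⟨C, hC, rfl⟩ := this
    exact ⟨C, hC, rfl, (hM _ (hLX _).1).2.1⟩
  refine ⟨X, hXU, (hmX u).2 (Or.inl rfl), (hmX v).2 (Or.inr (Or.inl rfl)), ?_, ?_⟩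
  · intro x hx
    obtain ⟨C, hC, -, h2⟩ := hsurj x hx
    rw [h2]; exact (hLX _).2
  · intro x hx y hy hr
    obtain ⟨C, hC, hx1, hx2⟩ := hsurj x hx
    obtain ⟨C', hC', hy1, hy2⟩ := hsurj y hy
    have key : ∀ q, BCreach K X (M x) q → ∃ w : L.verts, w ∈ C.supp ∧ ((w : B) : V) = q := by
      intro q hq
      induction hq with
      | refl => exact ⟨psi C, hpsi1 C hC, hx2.symm⟩
      | tail _ h ih =>
        obtain ⟨w, hw, rfl⟩ := ih
        obtain ⟨h1, h2⟩ := hLv _ (hs _ _ h.1).2 h.2.2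
        exact ⟨⟨_, h2⟩, (ConnectedComponent.mem_supp_congr_adj C (hadj w ⟨_, h2⟩ h.1)).1 hw, rfl⟩
    obtain ⟨w, hw, hw2⟩ := key _ hr
    rw [hy2] at hw2
    have h2 : w = psi C' := Subtype.ext (Subtype.ext hw2)
    rw [h2] at hw
    have h4 := hpsi1 C' hC'
    rw [ConnectedComponent.mem_supp_iff] at hw h4
    have : C = C' := hw.symm.trans h4
    rw [hx1, hy1, this]

/-- certificate -/
structure BCcert (K : SimpleGraph V) (U : Finset V) (M : V → V) (col : V → ℕ) : Prop where
  supp : ∀ a b, K.Adj a b → a ∈ U ∧ b ∈ U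
  pm : BCpm K U M
  ne : ∀ v ∈ U, col v ≠ col (M v)
  ex : ∀ u ∈ U, ∀ v ∈ U, col u ≠ col v → ∃ f, BCpm K (U \ {u, v}) f

/-- potential -/
noncomputable def BCphi (K : SimpleGraph V) (U : Finset V) (col : V → ℕ) : ℤ :=
  3 * (U.card : ℤ) + 2 * ((U.image col).card : ℤ) - 2 * (K.edgeSet.ncard : ℤ)

theorem bc_pm_mono {K K' : SimpleGraph V} (h : K ≤ K') {A : Finset V} {f : V → V}
    (hf : BCpm K A f) : BCpm K' A f :=
  fun v hv => ⟨(hf v hv).1, (hf v hv).2.1, h (hf v hv).2.2⟩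

theorem bc_mono_col {K : SimpleGraph V} {U X : Finset V} {M : V → V} {col : V → ℕ}
    (hC : BCcert K U M col) (hX : X ⊆ U) (hB : BCbar K M X) {x y : V} (hx : x ∈ X) (hy : y ∈ X) :
    col x = col y := by
  by_contra h
  obtain ⟨f, hf⟩ := hC.ex x (hX hx) y (hX hy) h
  exact bc_bar_no_pm hC.supp hC.pm hX hB hx hy hf

theorem bc_union {K : SimpleGraph V} {U X Y : Finset V} {M : V → V} {col : V → ℕ}
    (hC : BCcert K U M col) (hX : X ⊆ U) (hY : Y ⊆ U) (hBX : BCbar K M X) (hBY : BCbar K M Y)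
    {z : V} (hzX : z ∈ X) (hzY : z ∈ Y) : BCbar K M (X ∪ Y) := by
  have hcol : ∀ w ∈ X ∪ Y, col w = col z := by
    intro w hw
    rcases Finset.mem_union.1 hw with h | h
    · exact bc_mono_col hC hX hBX h hzX
    · exact bc_mono_col hC hY hBY h hzY
  have hsub : X ∪ Y ⊆ U := Finset.union_subset hX hY
  have key : ∀ x ∈ X, ∀ y ∈ Y, BCreach K (X ∪ Y) (M x) (M y) → x = y := by
    intro x hx y hy h
    by_contra hne
    have h1 : col z ≠ col (M x) := by
      rw [← hcol x (Finset.mem_union_left _ hx)]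
      exact hC.ne x (hX hx)
    obtain ⟨f, hf⟩ := hC.ex z (hX hzX) (M x) (hC.pm x (hX hx)).1 h1
    exact bc_union_aux hC.supp hC.pm hX hY hBX hBY hx hy hzX hzY hne hf
      (bc_reach_mono le_rfl Finset.subset_union_left h)
      (bc_reach_mono le_rfl Finset.subset_union_right h)
  refine ⟨?_, ?_⟩
  · intro w hw hMw
    exact hC.ne w (hsub hw) ((hcol w hw).trans (hcol _ hMw).symm)
  · intro x hx y hy h
    rcases Finset.mem_union.1 hx with hx1 | hx1 <;> rcases Finset.mem_union.1 hy with hy1 | hy1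
    · exact hBX.2 x hx1 y hy1 (bc_reach_mono le_rfl Finset.subset_union_left h)
    · exact key x hx1 y hy1 h
    · exact (key y hy1 x hx1 (bc_reach_symm h)).symm
    · exact hBY.2 x hx1 y hy1 (bc_reach_mono le_rfl Finset.subset_union_right h)

/-- color class is a barrier or splits -/
theorem bc_split_or_bar {K : SimpleGraph V} {U : Finset V} {M : V → V} {col : V → ℕ}
    (hC : BCcert K U M col) {u : V} (hu : u ∈ U) :
    BCbar K M (U.filter fun v => col v = col u) ∨
    ∃ A : Finset V, A ⊆ (U.filter fun v => col v = col u) ∧ A.Nonempty ∧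
      A ≠ (U.filter fun v => col v = col u) ∧
      ∀ a ∈ A, ∀ b ∈ (U.filter fun v => col v = col u), b ∉ A → ∃ f, BCpm K (U \ {a, b}) f := by
  classical
  by_contra hcon
  push Not at hcon
  obtain ⟨h1, h2⟩ := hcon
  set S := U.filter fun v => col v = col u with hS
  have hSU : S ⊆ U := Finset.filter_subset _ _
  set F : Finset (Finset V) := S.powerset.filter fun X => u ∈ X ∧ BCbar K M X with hF
  have h0 : ({u} : Finset V) ∈ F := by
    rw [hF, Finset.mem_filter, Finset.mem_powerset]
    refine ⟨?_, by simp, ?_, ?_⟩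
    · intro x hx
      rw [Finset.mem_singleton] at hx
      subst hx
      simp [hS, hu]
    · intro x hx
      rw [Finset.mem_singleton] at hx ⊢
      subst hx
      exact (hC.pm _ hu).2.2.ne'
    · intro x hx y hy _
      rw [Finset.mem_singleton] at hx hy
      rw [hx, hy]
  obtain ⟨X, hXF, hmax⟩ := F.exists_max_image Finset.card ⟨_, h0⟩
  rw [hF, Finset.mem_filter, Finset.mem_powerset] at hXF
  obtain ⟨hXS, huX, hXB⟩ := hXF
  have hXne : X ≠ S := fun h => h1 (h ▸ hXB)
  obtain ⟨a, ha, b, hb, hbX, hno⟩ := h2 X hXS ⟨u, huX⟩ hXne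
  have hab : a ≠ b := fun h => hbX (h ▸ ha)
  obtain ⟨Y, hYU, haY, hbY, hYB⟩ := bc_tutte hC.supp hC.pm (hSU (hXS ha)) (hSU hb) hab
    (by push Not; exact hno)
  have hun := bc_union hC (hXS.trans hSU) hYU hXB hYB ha haY
  have hmem : X ∪ Y ∈ F := by
    rw [hF, Finset.mem_filter, Finset.mem_powerset]
    refine ⟨?_, Finset.mem_union_left _ huX, hun⟩
    intro w hw
    have : col w = col u := bc_mono_col hC (Finset.union_subset (hXS.trans hSU) hYU) hun hw
      (Finset.mem_union_left _ huX)
    simp [hS, this, (Finset.union_subset (hXS.trans hSU) hYU) hw]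
  have := hmax _ hmem
  have hlt : X.card < (X ∪ Y).card := by
    apply Finset.card_lt_card
    rw [Finset.ssubset_iff_of_subset Finset.subset_union_left]
    exact ⟨b, Finset.mem_union_right _ hbY, hbX⟩
  omega

theorem bc_fresh (U : Finset V) (col : V → ℕ) : ∃ k : ℕ, ∀ v ∈ U, col v ≠ k := by
  obtain ⟨k, hk⟩ := Infinite.exists_notMem_finset (U.image col)
  exact ⟨k, fun v hv h => hk (h ▸ Finset.mem_image_of_mem _ hv)⟩

theorem bc_split {K : SimpleGraph V} {U : Finset V} {M : V → V} {col : V → ℕ}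
    (hC : BCcert K U M col) {u : V} {A : Finset V}
    (hA : A ⊆ (U.filter fun v => col v = col u)) (hA0 : A.Nonempty)
    (hA1 : A ≠ (U.filter fun v => col v = col u))
    (h : ∀ a ∈ A, ∀ b ∈ (U.filter fun v => col v = col u), b ∉ A → ∃ f, BCpm K (U \ {a, b}) f) :
    ∃ col', BCcert K U M col' ∧ (U.image col').card = (U.image col).card + 1 := by
  classical
  obtain ⟨k, hk⟩ := bc_fresh U col
  have hAU : ∀ a ∈ A, a ∈ U ∧ col a = col u := fun a ha => by simpa using hA ha
  have hex : ∃ b ∈ U, col b = col u ∧ b ∉ A := by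
    by_contra hcon
    push Not at hcon
    apply hA1
    apply Finset.Subset.antisymm hA
    intro b hb
    rw [Finset.mem_filter] at hb
    exact hcon b hb.1 hb.2
  refine ⟨fun v => if v ∈ A then k else col v, ⟨hC.supp, hC.pm, ?_, ?_⟩, ?_⟩
  · intro v hv
    have hMv := (hC.pm v hv).1
    have hne := hC.ne v hv
    by_cases h1 : v ∈ A <;> by_cases h2 : M v ∈ A <;> simp only [h1, h2, if_true, if_false]
    · exact absurd ((hAU _ h1).2.trans (hAU _ h2).2.symm) hne
    · exact (hk _ hMv).symm
    · exact hk _ hv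
    · exact hne
  · intro x hx y hy hxy
    by_cases h1 : x ∈ A <;> by_cases h2 : y ∈ A <;> simp only [h1, h2, if_true, if_false] at hxy
    · exact absurd rfl hxy
    · by_cases h3 : col x = col y
      · exact h x h1 y (by simp [hy, ← h3, (hAU _ h1).2]) h2
      · exact hC.ex x hx y hy h3
    · by_cases h3 : col x = col y
      · obtain ⟨f, hf⟩ := h y h2 x (by simp [hx, h3, (hAU _ h2).2]) h1
        exact ⟨f, by rwa [Finset.pair_comm]⟩
      · exact hC.ex x hx y hy h3
    · exact hC.ex x hx y hy hxy
  · have : U.image (fun v => if v ∈ A then k else col v) = insert k (U.image col) := by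
      ext c
      simp only [Finset.mem_image, Finset.mem_insert]
      constructor
      · rintro ⟨a, ha, rfl⟩
        by_cases h1 : a ∈ A
        · simp [h1]
        · simp only [h1, if_false]; exact Or.inr ⟨a, ha, rfl⟩
      · rintro (rfl | ⟨a, ha, rfl⟩)
        · obtain ⟨a, ha⟩ := hA0
          exact ⟨a, (hAU a ha).1, by simp [ha]⟩
        · by_cases h1 : a ∈ A
          · obtain ⟨b, hb, hb1, hb2⟩ := hex
            exact ⟨b, hb, by simp [hb2, hb1, (hAU a h1).2]⟩
          · exact ⟨a, ha, by simp [h1]⟩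
    rw [this, Finset.card_insert_of_notMem]
    intro hmem
    obtain ⟨a, ha, h3⟩ := Finset.mem_image.1 hmem
    exact hk a ha h3

theorem bc_cert_mono {K K' : SimpleGraph V} {U : Finset V} {M : V → V} {col : V → ℕ}
    (hC : BCcert K U M col) (hK : K ≤ K') (hs : ∀ a b, K'.Adj a b → a ∈ U ∧ b ∈ U) :
    BCcert K' U M col := by
  refine ⟨hs, bc_pm_mono hK hC.pm, hC.ne, ?_⟩
  intro u hu v hv h
  obtain ⟨f, hf⟩ := hC.ex u hu v hv h
  exact ⟨f, bc_pm_mono hK hf⟩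

theorem bc_ncard_sup_edge (K : SimpleGraph V) (a b : V) :
    (K ⊔ edge a b).edgeSet.ncard ≤ K.edgeSet.ncard + 1 := by
  rw [edgeSet_sup]
  refine (Set.ncard_union_le _ _).trans ?_
  have : ((edge a b).edgeSet).ncard ≤ 1 := by
    have h : (edge a b).edgeSet ⊆ {s(a, b)} := by
      rintro e
      induction e with
      | h x y =>
        simp only [mem_edgeSet, edge_adj, Set.mem_singleton_iff, Sym2.eq_iff]
        tauto
    simpa using Set.ncard_le_ncard h
  omega

theorem bc_lemA {K K' : SimpleGraph V} {U : Finset V} {M : V → V} {col : V → ℕ}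
    (hC : BCcert K U M col) (hK : K ≤ K') (hs : ∀ a b, K'.Adj a b → a ∈ U ∧ b ∈ U) :
    ∃ K1 col1, K ≤ K1 ∧ K1 ≤ K' ∧ BCcert K1 U M col1 ∧ BCphi K U col ≤ BCphi K1 U col1 ∧
      ∀ u ∈ U, ∀ v ∈ U, u ≠ v → (∃ f, BCpm K' (U \ {u, v}) f) → col1 u ≠ col1 v := by
  classical
  set P : ℕ → Prop := fun c => ∃ K1 col1, K ≤ K1 ∧ K1 ≤ K' ∧ BCcert K1 U M col1 ∧
    BCphi K U col ≤ BCphi K1 U col1 ∧ (U.image col1).card = c with hP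
  have hP0 : P (U.image col).card := ⟨K, col, le_rfl, hK, hC, le_rfl, rfl⟩
  have hbd : ∀ c, P c → c ≤ U.card := by
    rintro c ⟨K1, col1, -, -, -, -, rfl⟩
    exact Finset.card_image_le
  have hsp := Nat.findGreatest_spec (P := P) (hbd _ hP0) hP0
  have hmax : ∀ c, P c → c ≤ Nat.findGreatest P U.card := fun c hc =>
    Nat.le_findGreatest (hbd c hc) hc
  obtain ⟨K1, col1, h1, h2, h3, h4, h5⟩ := hsp
  rw [← h5] at hmax
  refine ⟨K1, col1, h1, h2, h3, h4, ?_⟩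
  rintro u hu v hv huv ⟨f, hf⟩ hcol
  set S := U.filter fun w => col1 w = col1 u with hS
  have hSU : S ⊆ U := Finset.filter_subset _ _
  have huS : u ∈ S := by simp [hS, hu]
  have hvS : v ∈ S := by simp [hS, hv, hcol]
  have hSB : BCbar K1 M S := by
    rcases bc_split_or_bar h3 hu with h | ⟨A, hA, hA0, hA1, hA2⟩
    · exact h
    · obtain ⟨col2, hc2, hcard⟩ := bc_split h3 hA hA0 hA1 hA2
      have := hmax _ ⟨K1, col2, h1, h2, hc2, by unfold BCphi at *; omega, hcard⟩
      omega
  have hpm' : BCpm K' U M := bc_pm_mono h2 h3.pm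
  have hnB : ¬ BCbar K' M S := fun h => bc_bar_no_pm hs hpm' hSU h huS hvS hf
  have hxy : ∃ x ∈ S, ∃ y ∈ S, BCreach K' S (M x) (M y) ∧ x ≠ y := by
    by_contra hcon
    push Not at hcon
    exact hnB ⟨hSB.1, hcon⟩
  obtain ⟨x, hx, y, hy, hr, hne⟩ := hxy
  have hcomp : ∀ t ∈ U, t ∉ S → ∃ w ∈ S, BCreach K1 S (M w) t := by
    intro t ht htS
    have : col1 u ≠ col1 t := fun h => htS (by simp [hS, ht, h])
    obtain ⟨g, hg⟩ := h3.ex u hu t ht this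
    obtain ⟨w, hw, h, -⟩ := bc_core_pair h3.supp h3.pm hSU hSB huS hg
    exact ⟨w, hw, h⟩
  have hedge : ∃ a b, K'.Adj a b ∧ a ∉ S ∧ b ∉ S ∧ BCreach K1 S (M x) a ∧ ¬ BCreach K1 S (M x) b := by
    by_contra hcon
    push Not at hcon
    have : ∀ q, BCreach K' S (M x) q → BCreach K1 S (M x) q := by
      intro q hq
      unfold BCreach at hq
      induction hq with
      | refl => exact Relation.ReflTransGen.refl
      | tail _ h ih => exact hcon _ _ h.1 h.2.1 h.2.2 ih
    exact hne (hSB.2 x hx y hy (this _ hr))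
  obtain ⟨a, b, hab, haS, hbS, hra, hrb⟩ := hedge
  obtain ⟨w, hw, hwb⟩ := hcomp b (hs a b hab).2 hbS
  have hwx : x ≠ w := fun h => hrb (h ▸ hwb)
  set K2 := K1 ⊔ edge a b with hK2
  have hle : K1 ≤ K2 := le_sup_left
  have hK2le : K2 ≤ K' := sup_le h2 (by
    intro p q hpq
    rw [edge_adj] at hpq
    rcases hpq.1 with ⟨rfl, rfl⟩ | ⟨rfl, rfl⟩
    · exact hab
    · exact hab.symm)
  have hs2 : ∀ p q, K2.Adj p q → p ∈ U ∧ q ∈ U := fun p q h => hs p q (hK2le h)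
  have hc2 := bc_cert_mono h3 hle hs2
  have hm2 := bc_ncard_sup_edge K1 a b
  rw [← hK2] at hm2
  rcases bc_split_or_bar hc2 hu with h | ⟨A, hA, hA0, hA1, hA2⟩
  · refine hwx (h.2 x hx w hw ?_)
    have r1 : BCreach K2 S (M x) a := bc_reach_mono hle (Finset.Subset.refl _) hra
    have r2 : BCreach K2 S b (M w) := bc_reach_symm (bc_reach_mono hle (Finset.Subset.refl _) hwb)
    have r3 : BCreach K2 S a b := Relation.ReflTransGen.single
      ⟨Or.inr (by rw [edge_adj]; exact ⟨Or.inl ⟨rfl, rfl⟩, hab.ne⟩), haS, hbS⟩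
    exact (r1.trans r3).trans r2
  · obtain ⟨col2, hc3, hcard⟩ := bc_split hc2 hA hA0 hA1 hA2
    have := hmax _ ⟨K2, col2, h1.trans hle, hK2le, hc3, by unfold BCphi at *; omega, hcard⟩
    omega

theorem bc_pm_insert_eq {K : SimpleGraph V} {A : Finset V} {p q : V} (h : ∃ f, BCpm K A f)
    (hp : p ∉ A) (hq : q ∉ A) (hpq : K.Adj p q) :
    ∃ f, BCpm K (insert p (insert q A)) f ∧ f p = q := by
  obtain ⟨f, hf⟩ := h
  have hne := hpq.ne
  refine ⟨fun v => if v = p then q else if v = q then p else f v, ?_, by simp⟩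
  intro v hv
  by_cases h1 : v = p
  · subst h1
    simp [hne.symm, hpq]
  by_cases h2 : v = q
  · subst h2
    simp [hne, hne.symm, hpq.symm]
  have hvA : v ∈ A := by
    simpa [h1, h2] using hv
  obtain ⟨h3, h4, h5⟩ := hf v hvA
  have h6 : f v ≠ p := fun h => hp (h ▸ h3)
  have h7 : f v ≠ q := fun h => hq (h ▸ h3)
  simp [h1, h2, h6, h7, h3, h4, h5]

theorem bc_pm_insert {K : SimpleGraph V} {A : Finset V} {p q : V} (h : ∃ f, BCpm K A f)
    (hp : p ∉ A) (hq : q ∉ A) (hpq : K.Adj p q) : ∃ f, BCpm K (insert p (insert q A)) f := by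
  obtain ⟨f, hf, -⟩ := bc_pm_insert_eq h hp hq hpq
  exact ⟨f, hf⟩

theorem bc_pm_restrict {K : SimpleGraph V} {A : Finset V} {f : V → V} (hf : BCpm K A f) {x : V}
    (hx : x ∈ A) : BCpm K (A \ {x, f x}) f := by
  intro v hv
  simp only [Finset.mem_sdiff, Finset.mem_insert, Finset.mem_singleton, not_or] at hv ⊢
  obtain ⟨h1, h2, h3⟩ := hf v hv.1
  refine ⟨⟨h1, ?_, ?_⟩, h2, h3⟩
  · intro h
    apply hv.2.2
    rw [← h, h2]
  · intro h
    apply hv.2.1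
    have := congrArg f h
    rwa [h2, (hf x hx).2.1] at this

theorem bc_pm_transfer {K K2 : SimpleGraph V} {x y : V}
    (hK : ∀ p q, K.Adj p q → K2.Adj p q ∨ (p = x ∧ q = y) ∨ (p = y ∧ q = x))
    {A : Finset V} {f : V → V} (hf : BCpm K A f) (h : ¬ (x ∈ A ∧ y ∈ A ∧ f x = y)) :
    BCpm K2 A f := by
  intro v hv
  obtain ⟨h1, h2, h3⟩ := hf v hv
  refine ⟨h1, h2, ?_⟩
  rcases hK _ _ h3 with h4 | ⟨h4, h5⟩ | ⟨h4, h5⟩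
  · exact h4
  · subst h4; exact absurd ⟨hv, h5 ▸ h1, h5⟩ h
  · subst h4; exact absurd ⟨h5 ▸ h1, hv, h5 ▸ h2⟩ h

/-- new colouring -/
def BCcol (col : V → ℕ) (x y a b : V) : V → ℕ :=
  fun v => if v = a then col y else if v = b then col x else col v

theorem bc_lemB {K K2 : SimpleGraph V} {U : Finset V} {M : V → V} {col : V → ℕ}
    (hC : BCcert K U M col) {x y a b : V} (hx : x ∈ U) (hy : y ∈ U) (hxy : col x ≠ col y)
    (ha : a ∉ U) (hb : b ∉ U) (hMa : M a = b) (hMb : M b = a)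
    (hs : ∀ p q, K2.Adj p q → p ∈ insert a (insert b U) ∧ q ∈ insert a (insert b U))
    (hK : ∀ p q, K.Adj p q → K2.Adj p q ∨ (p = x ∧ q = y) ∨ (p = y ∧ q = x))
    (hxa : K2.Adj x a) (hab : K2.Adj a b) (hby : K2.Adj b y) (hpm : BCpm K2 U M) :
    BCcert K2 (insert a (insert b U)) M (BCcol col x y a b) := by
  have hne := hab.ne
  have hUa : ∀ v ∈ U, v ≠ a := fun v hv h => ha (h ▸ hv)
  have hUb : ∀ v ∈ U, v ≠ b := fun v hv h => hb (h ▸ hv)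
  have hcolU : ∀ v ∈ U, BCcol col x y a b v = col v := fun v hv => by
    simp [BCcol, hUa v hv, hUb v hv]
  have hcola : BCcol col x y a b a = col y := by simp [BCcol]
  have hcolb : BCcol col x y a b b = col x := by simp [BCcol, hne.symm]
  have hxney : x ≠ y := fun h => hxy (by rw [h])
  have hQU : ∀ u ∈ U, ∀ v ∈ U, col u ≠ col v →
      ∃ f, BCpm K2 (insert a (insert b U) \ {u, v}) f := by
    intro u hu v hv huv
    obtain ⟨f, hf⟩ := hC.ex u hu v hv huv
    by_cases hc : x ∈ U \ {u, v} ∧ y ∈ U \ {u, v} ∧ f x = y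
    · obtain ⟨hx1, hy1, hfx⟩ := hc
      have h1 := bc_pm_restrict hf hx1
      rw [hfx] at h1
      have h2 := bc_pm_transfer hK h1 (by simp)
      have h3 := bc_pm_insert ⟨f, h2⟩ (p := x) (q := a) (by simp) (by simp [ha]) hxa
      have h4 := bc_pm_insert h3 (p := b) (q := y)
        (by simp [hb, (hUb x hx).symm, hne.symm]) (by simp [hxney.symm, hUa y hy]) hby
      convert h4 using 3
      ext w
      simp only [Finset.mem_sdiff, Finset.mem_insert, Finset.mem_singleton] at hx1 hy1 ⊢
      grind
    · have h2 := bc_pm_transfer hK hf hc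
      have h3 := bc_pm_insert ⟨f, h2⟩ (p := a) (q := b) (by simp [ha]) (by simp [hb]) hab
      convert h3 using 3
      ext w
      simp only [Finset.mem_sdiff, Finset.mem_insert, Finset.mem_singleton]
      grind
  have hQa : ∀ v ∈ U, col y ≠ col v → ∃ f, BCpm K2 (insert a (insert b U) \ {a, v}) f := by
    intro v hv hyv
    obtain ⟨f, hf⟩ := hC.ex y hy v hv hyv
    have hyv' : y ≠ v := fun h => hyv (by rw [h])
    have h2 := bc_pm_transfer hK hf (by simp)
    have h3 := bc_pm_insert ⟨f, h2⟩ (p := b) (q := y) (by simp [hb]) (by simp) hby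
    convert h3 using 3
    ext w
    simp only [Finset.mem_sdiff, Finset.mem_insert, Finset.mem_singleton]
    grind
  have hQb : ∀ v ∈ U, col x ≠ col v → ∃ f, BCpm K2 (insert a (insert b U) \ {b, v}) f := by
    intro v hv hyv
    obtain ⟨f, hf⟩ := hC.ex x hx v hv hyv
    have hyv' : x ≠ v := fun h => hyv (by rw [h])
    have h2 := bc_pm_transfer hK hf (by simp)
    have h3 := bc_pm_insert ⟨f, h2⟩ (p := x) (q := a) (by simp) (by simp [ha]) hxa
    convert h3 using 3
    ext w
    simp only [Finset.mem_sdiff, Finset.mem_insert, Finset.mem_singleton]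
    grind
  have hQab : ∃ f, BCpm K2 (insert a (insert b U) \ {a, b}) f := by
    refine ⟨M, ?_⟩
    convert hpm using 1
    ext w
    simp only [Finset.mem_sdiff, Finset.mem_insert, Finset.mem_singleton]
    grind
  refine ⟨hs, ?_, ?_, ?_⟩
  · intro v hv
    rw [Finset.mem_insert, Finset.mem_insert] at hv
    rcases hv with rfl | rfl | hv
    · simp [hMa, hMb, hab]
    · simp [hMa, hMb, hab.symm]
    · obtain ⟨h1, h2, h3⟩ := hpm v hv
      exact ⟨by simp [h1], h2, h3⟩
  · intro v hv
    rw [Finset.mem_insert, Finset.mem_insert] at hv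
    rcases hv with rfl | rfl | hv
    · rw [hMa, hcola, hcolb]; exact hxy.symm
    · rw [hMb, hcola, hcolb]; exact hxy
    · rw [hcolU v hv, hcolU _ (hpm v hv).1]; exact hC.ne v hv
  · intro u hu v hv huv
    rw [Finset.mem_insert, Finset.mem_insert] at hu hv
    rcases hu with rfl | rfl | hu <;> rcases hv with rfl | rfl | hv
    · exact absurd rfl huv
    · exact hQab
    · exact hQa v hv (by rwa [hcola, hcolU v hv] at huv)
    · rw [Finset.pair_comm]; exact hQab
    · exact absurd rfl huv
    · exact hQb v hv (by rwa [hcolb, hcolU v hv] at huv)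
    · rw [Finset.pair_comm]; exact hQa u hu (by rw [hcola, hcolU u hu] at huv; exact huv.symm)
    · rw [Finset.pair_comm]; exact hQb u hu (by rw [hcolb, hcolU u hu] at huv; exact huv.symm)
    · exact hQU u hu v hv (by rwa [hcolU u hu, hcolU v hv] at huv)

theorem bc_lemB_card {U : Finset V} {col : V → ℕ} {x y a b : V} (hx : x ∈ U) (hy : y ∈ U)
    (ha : a ∉ U) (hb : b ∉ U) (hne : a ≠ b) :
    (insert a (insert b U)).card = U.card + 2 ∧
    ((insert a (insert b U)).image (BCcol col x y a b)).card = (U.image col).card := by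
  have hUa : ∀ v ∈ U, v ≠ a := fun v hv h => ha (h ▸ hv)
  have hUb : ∀ v ∈ U, v ≠ b := fun v hv h => hb (h ▸ hv)
  constructor
  · rw [Finset.card_insert_of_notMem (by simp [hne, ha]), Finset.card_insert_of_notMem hb]
  · congr 1
    ext c
    simp only [Finset.mem_image, Finset.mem_insert]
    constructor
    · rintro ⟨v, rfl | rfl | hv, rfl⟩
      · exact ⟨y, hy, by simp [BCcol]⟩
      · exact ⟨x, hx, by simp [BCcol, hne.symm]⟩
      · exact ⟨v, hv, by simp [BCcol, hUa v hv, hUb v hv]⟩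
    · rintro ⟨v, hv, rfl⟩
      exact ⟨v, Or.inr (Or.inr hv), by simp [BCcol, hUa v hv, hUb v hv]⟩

/-- output of the ear lemma (without the potential bounds) -/
structure BCout (H : SimpleGraph V) (M : V → V) (N : V → V) (U W : Finset V) (u0 : V)
    (K1 : SimpleGraph V) (U1 : Finset V) (col1 : V → ℕ) : Prop where
  h1 : U ⊆ U1
  h2 : U1 ⊆ W
  cert : BCcert K1 U1 M col1
  sub : ∀ p q, K1.Adj p q → H.Adj p q ∨ M p = q ∨ N p = q
  adj : K1.Adj u0 (N u0)
  col : ∀ v ∈ W, K1.Adj v (N v) → col1 v ≠ col1 (N v)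

/-- rerouted involution -/
def BCsw (N : V → V) (x y : V) : V → V :=
  fun v => if v = x then y else if v = y then x else N v

theorem bc_edge_adj' {a b p q : V} (h : (edge a b).Adj p q) : (p = a ∧ q = b) ∨ (p = b ∧ q = a) := by
  rw [edge_adj] at h
  rcases h.1 with h | h <;> tauto

theorem bc_K2e {K3 : SimpleGraph V} {x y a b p q : V}
    (h : (K3 ⊔ edge x a ⊔ edge a b ⊔ edge b y).Adj p q) :
    K3.Adj p q ∨ (p = x ∧ q = a) ∨ (p = a ∧ q = x) ∨ (p = a ∧ q = b) ∨
      (p = b ∧ q = a) ∨ (p = b ∧ q = y) ∨ (p = y ∧ q = b) := by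
  rcases h with ((h | h) | h) | h
  · exact Or.inl h
  · have := bc_edge_adj' h; tauto
  · have := bc_edge_adj' h; tauto
  · have := bc_edge_adj' h; tauto

theorem bc_step {H K1 K3 : SimpleGraph V} {M N : V → V} {U W U1 : Finset V} {u0 : V} {col1 : V → ℕ}
    (hMW : ∀ v ∈ W, M v ∈ W ∧ M (M v) = v ∧ M v ≠ v) (hNW : ∀ v ∈ W, N v ∈ W ∧ N (N v) = v ∧ N v ≠ v)
    {a b x y : V} (haW : a ∈ W) (hMa : M a = b) (hNa : N a = x) (hNb : N b = y) (hNab : N a ≠ b)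
    (hO : BCout H M (BCsw N x y) U (W \ {a, b}) u0 K1 U1 col1)
    (hK13 : ∀ p q, K1.Adj p q → K3.Adj p q ∨ (p = x ∧ q = y) ∨ (p = y ∧ q = x))
    (hK31 : K3 ≤ K1) (hxy : K1.Adj x y) (hM3 : BCpm K3 U1 M)
    (hsub : ∀ p q, K3.Adj p q → H.Adj p q ∨ M p = q ∨ N p = q)
    (hu0 : u0 = x ∨ (u0 ≠ x ∧ u0 ≠ y ∧ (K1.Adj u0 (N u0) → K3.Adj u0 (N u0)))) :
    ∃ K2 U2 col2, BCout H M N U W u0 K2 U2 col2 ∧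
      BCphi K1 U1 col1 + 2 * K1.edgeSet.ncard - 2 * K3.edgeSet.ncard ≤ BCphi K2 U2 col2 := by
  obtain ⟨hbW, hMb, hba⟩ := hMW a haW
  rw [hMa] at hbW hMb hba
  obtain ⟨hxW, hNx, hxa⟩ := hNW a haW
  rw [hNa] at hxW hNx hxa hNab
  obtain ⟨hyW, hNy, hyb⟩ := hNW b hbW
  rw [hNb] at hyW hNy hyb
  have hya : y ≠ a := by
    intro h; rw [h, hNa] at hNy; exact hNab hNy
  have hxney := hxy.ne
  have hxU := (hO.cert.supp _ _ hxy).1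
  have hyU := (hO.cert.supp _ _ hxy).2
  have hW' := hO.h2
  have ha : a ∉ U1 := fun h => by simpa using hW' h
  have hb : b ∉ U1 := fun h => by simpa using hW' h
  have hcxy : col1 x ≠ col1 y := by
    have := hO.col x (hW' hxU) (by simpa [BCsw] using hxy)
    simpa [BCsw] using this
  set K2 := K3 ⊔ edge x a ⊔ edge a b ⊔ edge b y with hK2
  have hxaK : K2.Adj x a := by simp [hK2, edge_adj, hxa]
  have habK : K2.Adj a b := by simp [hK2, edge_adj, hba.symm]
  have hbyK : K2.Adj b y := by simp [hK2, edge_adj, hyb.symm]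
  have hle : K3 ≤ K2 := le_sup_left.trans (le_sup_left.trans le_sup_left)
  have hK2e : ∀ p q, K2.Adj p q → K3.Adj p q ∨ (p = x ∧ q = a) ∨ (p = a ∧ q = x) ∨ (p = a ∧ q = b) ∨
      (p = b ∧ q = a) ∨ (p = b ∧ q = y) ∨ (p = y ∧ q = b) := by
    exact fun p q h => bc_K2e h
  have hm : K2.edgeSet.ncard ≤ K3.edgeSet.ncard + 3 := by
    have e1 := bc_ncard_sup_edge K3 x a
    have e2 := bc_ncard_sup_edge (K3 ⊔ edge x a) a b
    have e3 := bc_ncard_sup_edge (K3 ⊔ edge x a ⊔ edge a b) b y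
    rw [← hK2] at e3
    omega
  obtain ⟨c1, c2⟩ := bc_lemB_card (col := col1) hxU hyU ha hb hba.symm
  refine ⟨K2, insert a (insert b U1), BCcol col1 x y a b, ⟨?_, ?_, ?_, ?_, ?_, ?_⟩, ?_⟩
  · exact hO.h1.trans ((Finset.subset_insert _ _).trans (Finset.subset_insert _ _))
  · intro v hv
    rw [Finset.mem_insert, Finset.mem_insert] at hv
    rcases hv with rfl | rfl | hv
    · exact haW
    · exact hbW
    · exact (Finset.mem_sdiff.1 (hW' hv)).1
  · apply bc_lemB hO.cert hxU hyU hcxy ha hb hMa hMb _ _ hxaK habK hbyK (bc_pm_mono hle hM3)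
    · intro p q h
      rcases hK2e p q h with h | h | h | h | h | h | h
      · have := hO.cert.supp _ _ (hK31 h)
        simp [this.1, this.2]
      all_goals (obtain ⟨rfl, rfl⟩ := h; simp [hxU, hyU])
    · intro p q h
      rcases hK13 p q h with h | h
      · exact Or.inl (hle h)
      · exact Or.inr h
  · intro p q h
    rcases hK2e p q h with h | h | h | h | h | h | h
    · exact hsub p q h
    all_goals (obtain ⟨rfl, rfl⟩ := h; simp_all)
  · rcases hu0 with rfl | ⟨h1, h2, h3⟩
    · rw [hNx]; exact hxaK
    · apply hle
      apply h3
      have := hO.adj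
      simpa [BCsw, h1, h2] using this
  · intro v hv hvN
    have hcol : ∀ w, w ≠ a → w ≠ b → BCcol col1 x y a b w = col1 w := fun w h1 h2 => by
      simp [BCcol, h1, h2]
    have hcola : BCcol col1 x y a b a = col1 y := by simp [BCcol]
    have hcolb : BCcol col1 x y a b b = col1 x := by simp [BCcol, hba]
    by_cases v1 : v = a
    · rw [v1, hNa, hcola, hcol x hxa hNab]; exact hcxy.symm
    by_cases v2 : v = b
    · rw [v2, hNb, hcolb, hcol y hya hyb]; exact hcxy
    by_cases v3 : v = x
    · rw [v3, hNx, hcola, hcol x hxa hNab]; exact hcxy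
    by_cases v4 : v = y
    · rw [v4, hNy, hcolb, hcol y hya hyb]; exact hcxy.symm
    have n1 : N v ≠ a := by
      intro h
      have h2 := (hNW v hv).2.1
      rw [h, hNa] at h2; exact v3 h2.symm
    have n2 : N v ≠ b := by
      intro h
      have h2 := (hNW v hv).2.1
      rw [h, hNb] at h2; exact v4 h2.symm
    rw [hcol v v1 v2, hcol _ n1 n2]
    have hv1 : K1.Adj v (N v) := by
      rcases hK2e _ _ hvN with h | h | h | h | h | h | h
      · exact hK31 h
      all_goals (exfalso; first | exact v1 h.1 | exact v2 h.1 | exact v3 h.1 | exact v4 h.1)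
    have := hO.col v (by simp [hv, v1, v2]) (by simpa [BCsw, v3, v4] using hv1)
    simpa [BCsw, v3, v4] using this
  · unfold BCphi
    rw [c1, c2]
    push_cast
    omega

theorem bc_del_ncard {K : SimpleGraph V} {x y : V} (h : K.Adj x y) :
    (K.deleteEdges {s(x, y)}).edgeSet.ncard + 1 = K.edgeSet.ncard := by
  rw [edgeSet_deleteEdges]
  exact Set.ncard_sdiff_singleton_add_one (by simpa using h)

/-- potential bounds -/
def BCbd (H : SimpleGraph V) (M N : V → V) (U : Finset V) (u0 : V) (p p1 : ℤ) : Prop :=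
  p - 2 ≤ p1 ∧ (N u0 ∉ U ∨ H.Adj u0 (N u0) → p ≤ p1) ∧
    (N u0 ∉ U → N (M (N u0)) ∉ U → p + 2 ≤ p1)

theorem bc_lemE_base {H : SimpleGraph V} {M N : V → V} {U : Finset V} {u0 : V} {col : V → ℕ}
    (hC : BCcert H U M col) (hNU : ∀ v ∈ U, N v ∈ U ∧ N (N v) = v ∧ N v ≠ v) (hu0 : u0 ∈ U) :
    ∃ K1 U1 col1, BCout H M N U U u0 K1 U1 col1 ∧
      BCbd H M N U u0 (BCphi H U col) (BCphi K1 U1 col1) := by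
  let K' : SimpleGraph V :=
    { Adj := fun p q => H.Adj p q ∨ (p ∈ U ∧ N p = q)
      symm := ⟨by
        rintro p q (h | ⟨h1, rfl⟩)
        · exact Or.inl h.symm
        · exact Or.inr ⟨(hNU p h1).1, (hNU p h1).2.1⟩⟩
      loopless := ⟨by
        rintro p (h | ⟨h1, h2⟩)
        · exact h.ne rfl
        · exact (hNU p h1).2.2 h2⟩ }
  have hHK : H ≤ K' := fun p q h => Or.inl h
  have hN : BCpm K' U N := fun v hv => ⟨(hNU v hv).1, (hNU v hv).2.1, Or.inr ⟨hv, rfl⟩⟩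
  have hs : ∀ a b, K'.Adj a b → a ∈ U ∧ b ∈ U := by
    rintro a b (h | ⟨h1, rfl⟩)
    · exact hC.supp _ _ h
    · exact ⟨h1, (hNU a h1).1⟩
  obtain ⟨K1, col1, h1, h2, h3, h4, h5⟩ := bc_lemA hC hHK hs
  have hcol : ∀ v ∈ U, col1 v ≠ col1 (N v) := fun v hv =>
    h5 v hv (N v) (hNU v hv).1 (hNU v hv).2.2.symm ⟨N, bc_pm_restrict hN hv⟩
  have hle : K1 ⊔ edge u0 (N u0) ≤ K' := sup_le h2 (by
    intro p q hpq
    rcases bc_edge_adj' hpq with ⟨rfl, rfl⟩ | ⟨rfl, rfl⟩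
    · exact (hN _ hu0).2.2
    · exact (hN _ hu0).2.2.symm)
  have hm := bc_ncard_sup_edge K1 u0 (N u0)
  refine ⟨K1 ⊔ edge u0 (N u0), U, col1, ⟨Finset.Subset.refl _, Finset.Subset.refl _, ?_, ?_, ?_, ?_⟩, ?_, ?_, ?_⟩
  · exact bc_cert_mono h3 le_sup_left (fun a b h => hs a b (hle h))
  · intro p q h
    rcases hle h with h | h
    · exact Or.inl h
    · exact Or.inr (Or.inr h.2)
  · refine Or.inr ?_
    rw [edge_adj]
    exact ⟨Or.inl ⟨rfl, rfl⟩, (hNU u0 hu0).2.2.symm⟩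
  · exact fun v hv _ => hcol v hv
  · unfold BCphi at *; omega
  · rintro (h | h)
    · exact absurd (hNU u0 hu0).1 h
    · have : K1 ⊔ edge u0 (N u0) = K1 := by
        rw [sup_eq_left]
        intro p q hpq
        rcases bc_edge_adj' hpq with ⟨rfl, rfl⟩ | ⟨rfl, rfl⟩
        · exact h1 h
        · exact (h1 h).symm
      rw [this]; exact h4
  · exact fun h => absurd (hNU u0 hu0).1 h

theorem bc_sw_inv {N : V → V} {W : Finset V} (hNW : ∀ v ∈ W, N v ∈ W ∧ N (N v) = v ∧ N v ≠ v)
    {a b : V} (haW : a ∈ W) (hbW : b ∈ W) (hab : a ≠ b) (hNab : N a ≠ b) :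
    ∀ v ∈ W \ {a, b}, BCsw N (N a) (N b) v ∈ W \ {a, b} ∧
      BCsw N (N a) (N b) (BCsw N (N a) (N b) v) = v ∧ BCsw N (N a) (N b) v ≠ v := by
  obtain ⟨hxW, hNx, hxa⟩ := hNW a haW
  obtain ⟨hyW, hNy, hyb⟩ := hNW b hbW
  have hya : N b ≠ a := by
    intro h; rw [h] at hNy; exact hNab hNy
  have hxy : N a ≠ N b := by
    intro h; rw [h, hNy] at hNx; exact hab hNx.symm
  intro v hv
  simp only [Finset.mem_sdiff, Finset.mem_insert, Finset.mem_singleton, not_or] at hv ⊢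
  obtain ⟨hvW, hva, hvb⟩ := hv
  obtain ⟨h1, h2, h3⟩ := hNW v hvW
  by_cases v1 : v = N a
  · subst v1
    simp [BCsw, hyW, hya, hyb, hxy.symm]
  by_cases v2 : v = N b
  · subst v2
    simp [BCsw, hxW, hxa, hNab, hxy, hxy.symm]
  have n1 : N v ≠ N a := by
    intro h; rw [h, hNx] at h2; exact hva h2.symm
  have n2 : N v ≠ N b := by
    intro h; rw [h, hNy] at h2; exact hvb h2.symm
  have n3 : N v ≠ a := by
    intro h; rw [h] at h2; exact v1 h2.symm
  have n4 : N v ≠ b := by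
    intro h; rw [h] at h2; exact v2 h2.symm
  simp [BCsw, v1, v2, n1, n2, n3, n4, h1, h2, h3]

theorem bc_lemE {H : SimpleGraph V} {M : V → V} {U : Finset V} {u0 : V} {col : V → ℕ}
    (hC : BCcert H U M col) (hu0 : u0 ∈ U) : ∀ (n : ℕ) (W : Finset V) (N : V → V), W.card ≤ n →
    U ⊆ W → (∀ v ∈ W, M v ∈ W ∧ M (M v) = v ∧ M v ≠ v) →
    (∀ v ∈ W, N v ∈ W ∧ N (N v) = v ∧ N v ≠ v) →
    ∃ K1 U1 col1, BCout H M N U W u0 K1 U1 col1 ∧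
      BCbd H M N U u0 (BCphi H U col) (BCphi K1 U1 col1) := by
  intro n
  induction n with
  | zero =>
    intro W N hW hUW
    exfalso
    have := Finset.card_pos.2 ⟨u0, hUW hu0⟩
    omega
  | succ n ih =>
    intro W N hWn hUW hMW hNW
    by_cases hWU : W = U
    · subst hWU
      exact bc_lemE_base hC hNW hu0
    have hex : ∃ a ∈ W, a ∉ U ∧ (N u0 ∉ U → a = N u0) := by
      by_cases h : N u0 ∈ U
      · obtain ⟨a, ha, ha'⟩ := Finset.exists_of_ssubset (Finset.ssubset_iff_subset_ne.2 ⟨hUW, fun h => hWU h.symm⟩)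
        exact ⟨a, ha, ha', fun h' => absurd h h'⟩
      · exact ⟨N u0, (hNW u0 (hUW hu0)).1, h, fun _ => rfl⟩
    obtain ⟨a, haW, haU, hatr⟩ := hex
    obtain ⟨hbW, hMb, hba⟩ := hMW a haW
    obtain ⟨b, hMa⟩ : ∃ b, M a = b := ⟨_, rfl⟩
    rw [hMa] at hbW hMb hba
    have hbU : b ∉ U := fun h => haU (hMb ▸ (hC.pm b h).1)
    have hUW' : U ⊆ W \ {a, b} := by
      intro v hv
      simp only [Finset.mem_sdiff, Finset.mem_insert, Finset.mem_singleton, not_or]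
      exact ⟨hUW hv, fun h => haU (h ▸ hv), fun h => hbU (h ▸ hv)⟩
    have hcard : (W \ {a, b}).card ≤ n := by
      have : (W \ {a, b}).card < W.card := by
        apply Finset.card_lt_card
        rw [Finset.ssubset_iff_of_subset Finset.sdiff_subset]
        exact ⟨a, haW, by simp⟩
      omega
    have hMW' : ∀ v ∈ W \ {a, b}, M v ∈ W \ {a, b} ∧ M (M v) = v ∧ M v ≠ v := by
      intro v hv
      simp only [Finset.mem_sdiff, Finset.mem_insert, Finset.mem_singleton, not_or] at hv ⊢
      obtain ⟨h1, h2, h3⟩ := hMW v hv.1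
      refine ⟨⟨h1, ?_, ?_⟩, h2, h3⟩
      · intro h; rw [h, hMa] at h2; exact hv.2.2 h2.symm
      · intro h; rw [h, hMb] at h2; exact hv.2.1 h2.symm
    by_cases hNab : N a = b
    · have hNb : N b = a := by rw [← hNab]; exact (hNW a haW).2.1
      have hNW' : ∀ v ∈ W \ {a, b}, N v ∈ W \ {a, b} ∧ N (N v) = v ∧ N v ≠ v := by
        intro v hv
        simp only [Finset.mem_sdiff, Finset.mem_insert, Finset.mem_singleton, not_or] at hv ⊢
        obtain ⟨h1, h2, h3⟩ := hNW v hv.1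
        refine ⟨⟨h1, ?_, ?_⟩, h2, h3⟩
        · intro h; rw [h, hNab] at h2; exact hv.2.2 h2.symm
        · intro h; rw [h, hNb] at h2; exact hv.2.1 h2.symm
      obtain ⟨K1, U1, col1, hO, hbd⟩ := ih (W \ {a, b}) N hcard hUW' hMW' hNW'
      refine ⟨K1, U1, col1, ⟨hO.h1, hO.h2.trans Finset.sdiff_subset, hO.cert, hO.sub, hO.adj, ?_⟩, hbd⟩
      intro v hv hvN
      exact hO.col v (hO.h2 (hO.cert.supp _ _ hvN).1) hvN
    · have hNW' := bc_sw_inv hNW haW hbW hba.symm hNab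
      obtain ⟨x, hNa⟩ : ∃ x, N a = x := ⟨_, rfl⟩
      obtain ⟨y, hNb⟩ : ∃ y, N b = y := ⟨_, rfl⟩
      rw [hNa, hNb] at hNW'
      obtain ⟨K1, U1, col1, hO, hbd⟩ := ih (W \ {a, b}) (BCsw N x y) hcard hUW' hMW' hNW'
      have hNx : N x = a := by rw [← hNa]; exact (hNW a haW).2.1
      have hNy : N y = b := by rw [← hNb]; exact (hNW b hbW).2.1
      have haU1 : a ∉ U1 := fun h => by simpa using hO.h2 h
      have hbU1 : b ∉ U1 := fun h => by simpa using hO.h2 h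
      have hxy : x ≠ y := by
        intro h; rw [h, hNy] at hNx; exact hba hNx
      -- deleting the rerouted edge
      have hdel13 : ∀ p q, K1.Adj p q → (K1.deleteEdges {s(x, y)}).Adj p q ∨ (p = x ∧ q = y) ∨
          (p = y ∧ q = x) := by
        intro p q h
        rw [deleteEdges_adj, Set.mem_singleton_iff, Sym2.eq_iff]
        tauto
      have hdelM : M x ≠ y → BCpm (K1.deleteEdges {s(x, y)}) U1 M := fun h =>
        bc_pm_transfer hdel13 hO.cert.pm (fun h' => h h'.2.2)
      have hsub0 : ∀ p q, K1.Adj p q → (H.Adj p q ∨ M p = q ∨ N p = q) ∨ (p = x ∧ q = y) ∨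
          (p = y ∧ q = x) := by
        intro p q h
        by_cases p1 : p = x
        · rcases hO.sub p q h with h | h | h
          · exact Or.inl (Or.inl h)
          · exact Or.inl (Or.inr (Or.inl h))
          · simp only [BCsw, p1, if_true] at h
            exact Or.inr (Or.inl ⟨p1, h.symm⟩)
        by_cases p2 : p = y
        · rcases hO.sub p q h with h | h | h
          · exact Or.inl (Or.inl h)
          · exact Or.inl (Or.inr (Or.inl h))
          · simp only [BCsw, p2, if_true, hxy.symm, if_false] at h
            exact Or.inr (Or.inr ⟨p2, h.symm⟩)
        have := hO.sub p q h
        simp only [BCsw, p1, p2, if_false] at this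
        exact Or.inl this
      have hdelsub : ∀ p q, (K1.deleteEdges {s(x, y)}).Adj p q → H.Adj p q ∨ M p = q ∨ N p = q := by
        intro p q h
        rw [deleteEdges_adj, Set.mem_singleton_iff, Sym2.eq_iff] at h
        have := hsub0 p q h.1
        tauto
      have hle : K1.deleteEdges {s(x, y)} ≤ K1 := deleteEdges_le _
      by_cases hNu : N u0 ∈ U
      · have hu0x : u0 ≠ x := fun h => haU (by rw [← hNx, ← h]; exact hNu)
        have hu0y : u0 ≠ y := fun h => hbU (by rw [← hNy, ← h]; exact hNu)
        have hswu : BCsw N x y u0 = N u0 := by simp [BCsw, hu0x, hu0y]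
        have hbd' : BCbd H M N U u0 (BCphi H U col) (BCphi K1 U1 col1) := by
          refine ⟨hbd.1, ?_, fun h => absurd hNu h⟩
          have := hbd.2.1
          rwa [hswu] at this
        by_cases hc : K1.Adj x y ∧ ¬ H.Adj x y ∧ M x ≠ y
        · obtain ⟨c1, c2, c3⟩ := hc
          obtain ⟨K2, U2, col2, hO2, hphi⟩ := bc_step hMW hNW haW hMa hNa hNb hNab hO hdel13 hle c1
            (hdelM c3) hdelsub (Or.inr ⟨hu0x, hu0y, fun h => by
              rw [deleteEdges_adj, Set.mem_singleton_iff, Sym2.eq_iff]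
              exact ⟨h, by tauto⟩⟩)
          have hm := bc_del_ncard c1
          refine ⟨K2, U2, col2, hO2, ?_⟩
          have : BCphi K1 U1 col1 ≤ BCphi K2 U2 col2 := by omega
          exact ⟨hbd'.1.trans this, fun h => (hbd'.2.1 h).trans this, fun h => absurd hNu h⟩
        · refine ⟨K1, U1, col1, ⟨hO.h1, hO.h2.trans Finset.sdiff_subset, hO.cert, ?_, ?_, ?_⟩, hbd'⟩
          · intro p q h
            rcases hsub0 p q h with h1 | ⟨rfl, rfl⟩ | ⟨rfl, rfl⟩
            · exact h1
            · by_cases h1 : H.Adj p q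
              · exact Or.inl h1
              · by_cases h2 : M p = q
                · exact Or.inr (Or.inl h2)
                · exact absurd ⟨h, h1, h2⟩ hc
            · by_cases h1 : H.Adj p q
              · exact Or.inl h1
              · by_cases h2 : M q = p
                · refine Or.inr (Or.inl ?_)
                  rw [← h2]
                  exact (hO.cert.pm q (hO.cert.supp _ _ h).2).2.1
                · exact absurd ⟨h.symm, fun h3 => h1 h3.symm, h2⟩ hc
          · rw [← hswu]; exact hO.adj
          · intro v hv hvN
            have hvU := hO.cert.supp _ _ hvN
            have v1 : v ≠ x := fun h => haU1 (by rw [← hNx, ← h]; exact hvU.2)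
            have v2 : v ≠ y := fun h => hbU1 (by rw [← hNy, ← h]; exact hvU.2)
            have := hO.col v (hO.h2 hvU.1) (by simpa [BCsw, v1, v2] using hvN)
            simpa [BCsw, v1, v2] using this
      · have hau := hatr hNu
        have hxu : u0 = x := by
          rw [← hNa, hau]; exact ((hNW u0 (hUW hu0)).2.1).symm
        have hswu : BCsw N x y u0 = y := by simp [BCsw, hxu]
        have hK1xy : K1.Adj x y := by
          have := hO.adj
          rwa [hswu, hxu] at this
        have hNMN : N (M (N u0)) = y := by rw [← hau, hMa, hNb]
        obtain ⟨b1, b2, -⟩ := hbd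
        rw [hswu] at b2
        by_cases hH : H.Adj u0 y
        · have hyU := (hC.supp _ _ hH).2
          have hHxy : H.Adj x y := hxu ▸ hH
          obtain ⟨K2, U2, col2, hO2, hphi⟩ := bc_step hMW hNW haW hMa hNa hNb hNab hO
            (K3 := K1) (fun p q h => Or.inl h) le_rfl hK1xy hO.cert.pm (by
              intro p q h
              rcases hsub0 p q h with h | ⟨rfl, rfl⟩ | ⟨rfl, rfl⟩
              · exact h
              · exact Or.inl hHxy
              · exact Or.inl hHxy.symm) (Or.inl hxu)
          have h1 := b2 (Or.inr hH)
          refine ⟨K2, U2, col2, hO2, by omega, fun _ => by omega, fun _ h => ?_⟩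
          rw [hNMN] at h
          exact absurd hyU h
        · have hMx : M x ≠ y := by
            intro h
            apply hH
            rw [← h, ← hxu]
            exact (hC.pm u0 hu0).2.2
          obtain ⟨K2, U2, col2, hO2, hphi⟩ := bc_step hMW hNW haW hMa hNa hNb hNab hO hdel13 hle hK1xy
            (hdelM hMx) hdelsub (Or.inl hxu)
          have hm := bc_del_ncard hK1xy
          refine ⟨K2, U2, col2, hO2, by omega, fun _ => by omega, fun _ h => ?_⟩
          rw [hNMN] at h
          have := b2 (Or.inl h)
          omega

theorem bc_edge_pm {G : SimpleGraph V}
    (hG : ∀ u v, u ≠ v → ∃ f, BCpm G (Finset.univ \ {u, v}) f) {u p : V} (h : G.Adj u p) :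
    ∃ N, BCpm G Finset.univ N ∧ N u = p := by
  obtain ⟨N, hN, h1⟩ := bc_pm_insert_eq (hG u p h.ne) (p := u) (q := p) (by simp) (by simp) h
  refine ⟨N, ?_, h1⟩
  convert hN using 1
  ext w
  simp only [Finset.mem_sdiff, Finset.mem_insert, Finset.mem_singleton, Finset.mem_univ]
  tauto

theorem bc_leave {G : SimpleGraph V}
    (hG : ∀ u v, u ≠ v → ∃ f, BCpm G (Finset.univ \ {u, v}) f) {U : Finset V} (hU : U.Nonempty)
    (hU1 : U ≠ Finset.univ) (hev : Even U.card) : ∃ u ∈ U, ∃ p, p ∉ U ∧ G.Adj u p := by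
  by_contra hcon
  push Not at hcon
  obtain ⟨u, hu⟩ := hU
  obtain ⟨v, hv⟩ : ∃ v, v ∉ U := by
    by_contra h
    push Not at h
    exact hU1 (Finset.eq_univ_iff_forall.2 h)
  obtain ⟨f, hf⟩ := hG u v (fun h => hv (h ▸ hu))
  have : Even (U.erase u).card := by
    apply bc_even _ f
    intro w hw
    rw [Finset.mem_erase] at hw
    have hwv : w ≠ v := fun h => hv (h ▸ hw.2)
    obtain ⟨h1, h2, h3⟩ := hf w (by simp [hw.1, hwv])
    have h4 : f w ∈ U := by
      by_contra h4
      exact hcon w hw.2 _ h4 h3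
    have h5 : f w ≠ u := by
      intro h; rw [h] at h1; simp at h1
    exact ⟨Finset.mem_erase.2 ⟨h5, h4⟩, h2, h3.ne'⟩
  rw [Finset.card_erase_of_mem hu] at this
  have hpos := Finset.card_pos.2 ⟨u, hu⟩
  rcases hev with ⟨k, hk⟩
  rcases this with ⟨l, hl⟩
  omega

theorem bc_pm_inv {K : SimpleGraph V} {A : Finset V} {f : V → V} (hf : BCpm K A f) :
    ∀ v ∈ A, f v ∈ A ∧ f (f v) = v ∧ f v ≠ v :=
  fun v hv => ⟨(hf v hv).1, (hf v hv).2.1, (hf v hv).2.2.ne'⟩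

theorem bc_initial {G : SimpleGraph V} (hn : 6 ≤ Fintype.card V)
    (hG : ∀ u v, u ≠ v → ∃ f, BCpm G (Finset.univ \ {u, v}) f) :
    ∃ M N u, BCpm G Finset.univ M ∧ BCpm G Finset.univ N ∧ N u ≠ M u ∧ N (M (N u)) ≠ M u := by
  by_contra hcon
  push Not at hcon
  have hM : ∃ M, BCpm G Finset.univ M := by
    obtain ⟨a, b, hab⟩ := Fintype.exists_pair_of_one_lt_card (α := V) (by omega)
    obtain ⟨f, hf⟩ := hG a b hab
    obtain ⟨c, hc⟩ : ∃ c, c ∈ Finset.univ \ ({a, b} : Finset V) := by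
      rw [← Finset.Nonempty, ← Finset.card_pos]
      have h1 := Finset.le_card_sdiff ({a, b} : Finset V) Finset.univ
      have h2 := Finset.card_le_two (a := a) (b := b)
      rw [Finset.card_univ] at h1
      omega
    obtain ⟨N, hN, -⟩ := bc_edge_pm hG (hf c hc).2.2
    exact ⟨N, hN⟩
  obtain ⟨M, hM⟩ := hM
  have hMM : ∀ v, M (M v) = v := fun v => (hM v (Finset.mem_univ _)).2.1
  have hMne : ∀ v, M v ≠ v := fun v => (hM v (Finset.mem_univ _)).2.2.ne'
  obtain ⟨a0⟩ : Nonempty V := Fintype.card_pos_iff.1 (by omega)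
  have hl1 := bc_leave hG (U := {a0, M a0}) ⟨a0, by simp⟩ (by
    intro h
    have h2 := Finset.card_le_two (a := a0) (b := M a0)
    rw [h, Finset.card_univ] at h2
    omega) (by rw [Finset.card_pair (hMne a0).symm]; decide)
  have hl2 : ∃ a d, G.Adj a d ∧ d ≠ a ∧ d ≠ M a := by
    obtain ⟨u, hu, p, hp, hadj⟩ := hl1
    simp only [Finset.mem_insert, Finset.mem_singleton, not_or] at hu hp
    rcases hu with rfl | rfl
    · exact ⟨u, p, hadj, hp.1, hp.2⟩
    · exact ⟨_, p, hadj, hp.2, by rw [hMM]; exact hp.1⟩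
  obtain ⟨a, d, had, hda, hdM⟩ := hl2
  obtain ⟨N0, hN0, hN0a⟩ := bc_edge_pm hG had
  have hNN : ∀ v, N0 (N0 v) = v := fun v => (hN0 v (Finset.mem_univ _)).2.1
  have hc := hcon M N0 a hM hN0 (by rw [hN0a]; exact hdM)
  rw [hN0a] at hc
  obtain ⟨b, hb⟩ : ∃ b, M a = b := ⟨_, rfl⟩
  obtain ⟨c, hcd⟩ : ∃ c, M d = c := ⟨_, rfl⟩
  have hMb : M b = a := by rw [← hb, hMM]
  have hMc : M c = d := by rw [← hcd, hMM]
  rw [hcd, hb] at hc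
  rw [hb] at hdM
  have hN0d : N0 d = a := by rw [← hN0a, hNN]
  have hN0b : N0 b = c := by rw [← hc, hNN]
  have hca : c ≠ a := by
    intro h; rw [h, hb] at hMc; exact hdM hMc.symm
  set Q : Finset V := {a, b, c, d} with hQ
  have hMQ : ∀ v ∈ Q, M v ∈ Q := by
    intro v hv
    simp only [hQ, Finset.mem_insert, Finset.mem_singleton] at hv ⊢
    rcases hv with rfl | rfl | rfl | rfl <;> simp [*]
  have hNQ : ∀ v ∈ Q, N0 v ∈ Q := by
    intro v hv
    simp only [hQ, Finset.mem_insert, Finset.mem_singleton] at hv ⊢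
    rcases hv with rfl | rfl | rfl | rfl <;> simp [*]
  have hMQ' : ∀ v, v ∉ Q → M v ∉ Q := by
    intro v hv h
    have := hMQ _ h
    rw [hMM] at this
    exact hv this
  have hne : ∀ v ∈ Q, M v ≠ N0 v := by
    intro v hv
    simp only [hQ, Finset.mem_insert, Finset.mem_singleton] at hv
    rcases hv with rfl | rfl | rfl | rfl
    · rw [hb, hN0a]; exact hdM.symm
    · rw [hMb, hN0b]; exact hca.symm
    · rw [hMc, hc]; exact hdM
    · rw [hcd, hN0d]; exact hca
  have hM2 : BCpm G Finset.univ (fun v => if v ∈ Q then N0 v else M v) := by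
    intro v _
    refine ⟨Finset.mem_univ _, ?_, ?_⟩
    · by_cases h : v ∈ Q
      · simp [h, hNQ v h, hNN]
      · simp [h, hMQ' v h, hMM]
    · by_cases h : v ∈ Q
      · simpa [h] using (hN0 v (Finset.mem_univ _)).2.2
      · simpa [h] using (hM v (Finset.mem_univ _)).2.2
  obtain ⟨p, hp, x, hx, hpx⟩ := bc_leave hG (U := Q) ⟨a, by simp [hQ]⟩ (by
    intro h
    have h2 : Q.card ≤ 4 := Finset.card_le_four
    rw [h, Finset.card_univ] at h2
    omega) (bc_even Q M fun v hv => ⟨hMQ v hv, hMM v, hMne v⟩)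
  obtain ⟨N, hN, hNp⟩ := bc_edge_pm hG hpx
  have e1 := hcon M N p hM hN (by rw [hNp]; intro h; exact hx (h ▸ hMQ p hp))
  have e2 := hcon _ N p hM2 hN (by
    rw [hNp]; simp only [hp, if_true]; intro h; exact hx (h ▸ hNQ p hp))
  rw [hNp] at e1 e2
  simp only [hp, hx, if_true, if_false] at e2
  exact hne p hp (e1.symm.trans e2)

theorem bc_start {G : SimpleGraph V} {M N : V → V} {u : V} (hM : BCpm G Finset.univ M)
    (hN : BCpm G Finset.univ N) (h1 : N u ≠ M u) (h2 : N (M (N u)) ≠ M u) :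
    ∃ K U col, K ≤ G ∧ BCcert K U M col ∧ 10 ≤ BCphi K U col ∧ u ∈ U := by
  have hMu := hM u (Finset.mem_univ _)
  have hne := hMu.2.2.ne
  have hC : BCcert (edge u (M u)) {u, M u} M (fun v => if v = u then 0 else 1) := by
    have hadj : (edge u (M u)).Adj u (M u) := by simp [edge_adj, hne]
    refine ⟨?_, ?_, ?_, ?_⟩
    · intro p q h
      rcases bc_edge_adj' h with ⟨rfl, rfl⟩ | ⟨rfl, rfl⟩ <;> simp
    · intro v hv
      simp only [Finset.mem_insert, Finset.mem_singleton] at hv ⊢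
      rcases hv with rfl | rfl
      · exact ⟨by simp, hMu.2.1, hadj⟩
      · rw [hMu.2.1]
        exact ⟨by simp, rfl, hadj.symm⟩
    · intro v hv
      simp only [Finset.mem_insert, Finset.mem_singleton] at hv
      rcases hv with rfl | rfl
      · simp [hne.symm]
      · simp [hne.symm, hMu.2.1]
    · intro p hp q hq hpq
      refine ⟨M, ?_⟩
      intro v hv
      exfalso
      simp only [Finset.mem_insert, Finset.mem_singleton, Finset.mem_sdiff, not_or] at hp hq hv
      rcases hp with rfl | rfl <;> rcases hq with rfl | rfl
      · exact hpq rfl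
      · rcases hv.1 with h | h
        · exact hv.2.1 h
        · exact hv.2.2 h
      · rcases hv.1 with h | h
        · exact hv.2.2 h
        · exact hv.2.1 h
      · exact hpq rfl
  have hphi : 8 ≤ BCphi (edge u (M u)) {u, M u} (fun v => if v = u then 0 else 1) := by
    have hm := bc_ncard_sup_edge (⊥ : SimpleGraph V) u (M u)
    rw [bot_sup_eq, edgeSet_bot, Set.ncard_empty] at hm
    have hc : (({u, M u} : Finset V).image (fun v => if v = u then 0 else 1)).card = 2 := by
      simp [Finset.image_insert, hne.symm]
    unfold BCphi
    rw [hc, Finset.card_pair hne]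
    push_cast
    omega
  obtain ⟨K, U, col, hO, hbd⟩ := bc_lemE hC (u0 := u) (by simp) _ Finset.univ N le_rfl
    (Finset.subset_univ _) (bc_pm_inv hM) (bc_pm_inv hN)
  refine ⟨K, U, col, ?_, hO.cert, ?_, hO.h1 (by simp)⟩
  · intro p q h
    rcases hO.sub p q h with h | rfl | rfl
    · rcases bc_edge_adj' h with ⟨rfl, rfl⟩ | ⟨rfl, rfl⟩
      · exact hMu.2.2
      · exact hMu.2.2.symm
    · exact (hM p (Finset.mem_univ _)).2.2
    · exact (hN p (Finset.mem_univ _)).2.2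
  · have hNu := hN u (Finset.mem_univ _)
    have := hbd.2.2 (by simp [hNu.2.2.ne', h1]) (by
      simp only [Finset.mem_insert, Finset.mem_singleton, not_or]
      refine ⟨?_, h2⟩
      intro h
      have h3 := (hN (M (N u)) (Finset.mem_univ _)).2.1
      rw [h] at h3
      exact (hM (N u) (Finset.mem_univ _)).2.2.ne h3)
    omega

theorem bc_main {G : SimpleGraph V} (hn : 6 ≤ Fintype.card V)
    (hG : ∀ u v, u ≠ v → ∃ f, BCpm G (Finset.univ \ {u, v}) f) :
    ∃ K ≤ G, (∀ u v, u ≠ v → ∃ f, BCpm K (Finset.univ \ {u, v}) f) ∧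
      2 * K.edgeSet.ncard + 10 ≤ 5 * Fintype.card V := by
  classical
  obtain ⟨M, N, u, hM, hN, h1, h2⟩ := bc_initial hn hG
  set P : ℕ → Prop := fun k => ∃ K U col, K ≤ G ∧ BCcert K U M col ∧ 10 ≤ BCphi K U col ∧ u ∈ U ∧
    U.card = k with hP
  obtain ⟨K0, U0, col0, k1, k2, k3, k4⟩ := bc_start hM hN h1 h2
  have hP0 : P U0.card := ⟨K0, U0, col0, k1, k2, k3, k4, rfl⟩
  have hbd : ∀ k, P k → k ≤ Fintype.card V := by
    rintro k ⟨K1, U1, col1, -, -, -, -, rfl⟩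
    exact Finset.card_le_univ _
  have hsp := Nat.findGreatest_spec (P := P) (hbd _ hP0) hP0
  have hmax : ∀ c, P c → c ≤ Nat.findGreatest P (Fintype.card V) := fun c hc =>
    Nat.le_findGreatest (hbd c hc) hc
  obtain ⟨K, U, col, hK, hC, hphi, huU, hcard⟩ := hsp
  rw [← hcard] at hmax
  have hU : U = Finset.univ := by
    by_contra hU
    obtain ⟨u0, hu0, p, hp, hadj⟩ := bc_leave hG ⟨u, huU⟩ hU (bc_even U M (bc_pm_inv hC.pm))
    obtain ⟨N1, hN1, hNu⟩ := bc_edge_pm hG hadj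
    obtain ⟨K1, U1, col1, hO, hb⟩ := bc_lemE hC hu0 _ Finset.univ N1 le_rfl
      (Finset.subset_univ _) (bc_pm_inv hM) (bc_pm_inv hN1)
    have hle : K1 ≤ G := by
      intro p q h
      rcases hO.sub p q h with h | rfl | rfl
      · exact hK h
      · exact (hM p (Finset.mem_univ _)).2.2
      · exact (hN1 p (Finset.mem_univ _)).2.2
    have hb2 := hb.2.1 (Or.inl (by rw [hNu]; exact hp))
    have hpU : p ∈ U1 := by
      have := hO.adj
      rw [hNu] at this
      exact (hO.cert.supp _ _ this).2
    have := hmax _ ⟨K1, U1, col1, hle, hO.cert, by omega, hO.h1 huU, rfl⟩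
    have hlt : U.card < U1.card := by
      apply Finset.card_lt_card
      rw [Finset.ssubset_iff_of_subset hO.h1]
      exact ⟨p, hpU, hp⟩
    omega
  subst hU
  obtain ⟨K1, col1, -, h4, h5, h6, h7⟩ := bc_lemA hC hK (fun a b _ => by simp)
  have hdis : ∀ u v, u ≠ v → col1 u ≠ col1 v := fun u v h =>
    h7 u (Finset.mem_univ _) v (Finset.mem_univ _) h (hG u v h)
  refine ⟨K1, h4, fun u v h => h5.ex u (Finset.mem_univ _) v (Finset.mem_univ _) (hdis u v h), ?_⟩
  have hc : ((Finset.univ : Finset V).image col1).card ≤ (Finset.univ : Finset V).card :=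
    Finset.card_image_le
  unfold BCphi at *
  rw [Finset.card_univ] at *
  omega

theorem bc_bic_iff (G : SimpleGraph V) :
    IsBicritical G ↔ ∀ u v, u ≠ v → ∃ f, BCpm G (Finset.univ \ {u, v}) f := by
  unfold IsBicritical
  refine forall_congr' fun u => forall_congr' fun v => imp_congr_right fun _ => ?_
  apply bc_conv
  intro w
  simp

end BCProof

theorem minimal_bicritical_edge_bound {V : Type*} [Fintype V]
    (G : SimpleGraph V) [DecidableRel G.Adj]
    (hn : 6 ≤ Fintype.card V) (hG : IsMinimalBicritical G) :
    2 * G.edgeFinset.card ≤ 5 * (Fintype.card V - 2) := by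
  classical
  obtain ⟨h1, h2⟩ := hG
  obtain ⟨K, hK, hb, hm⟩ := bc_main hn ((bc_bic_iff G).1 h1)
  have hKG : K = G := by
    apply le_antisymm hK
    intro a b hab
    by_contra hne
    apply h2 s(a, b) hab
    rw [bc_bic_iff]
    intro u v huv
    obtain ⟨f, hf⟩ := hb u v huv
    refine ⟨f, bc_pm_mono ?_ hf⟩
    intro p q hpq
    rw [deleteEdges_adj, Set.mem_singleton_iff, Sym2.eq_iff]
    refine ⟨hK hpq, ?_⟩
    rintro (⟨rfl, rfl⟩ | ⟨rfl, rfl⟩)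
    · exact hne hpq
    · exact hne hpq.symm
  subst hKG
  have : K.edgeFinset.card = K.edgeSet.ncard := by
    rw [← coe_edgeFinset, Set.ncard_coe_finset]
  omega
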